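/- Let n ≥ 2, M ≥ 1, s ∈ (0,1), p ∈ (1,∞), r > 0 and δ ∈ (0, 1/4). Let u, v : ℝⁿ → ℝ^M be measurable maps whose restrictions to the sphere ∂B(0,r) are continuous, and assume the quantities A := ∫_{∂B(0,r)} ∫_{B(0,2r)∖B(0,r)} |u(θ)−u(y)|^p/|θ−y|^{n+sp} dy dσ(θ), B := ∫_{∂B(0,r)} ∫_{B(0,r)} |v(θ)−v(y)|^p/|θ−y|^{n+sp} dy dσ(θ), and D := ∫_{∂B(0,r)} ∫_{∂B(0,r)} |u(θ)−u(ω)|^p/|θ−ω|^{n−1+sp} dσ(θ) dσ(ω) are finite, where σ is the (n−1)-dimensional Hausdorff measure on ∂B(0,r). Let η : [0,∞) → [0,1] be smooth with η ≡ 1 on [0,(1−3δ/4)r], η ≡ 0 on [(1−δ/2)r, ∞) and |η'| ≤ 100/(δr). Define w : ℝⁿ → ℝ^M by w(x) := u(x) for |x| ≥ r; w(x) := (1−η(|x|)) u(r x/|x|) + η(|x|) v(r x/|x|) for (1−δ)r < |x| < r; and w(x) := v(x/(1−δ)) for |x| ≤ (1−δ)r. Then: (i) for every R ≥ r, sup_{x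 ∈ B(0,R)} dist(w(x), u(B(0,R)) ∪ v(B(0,R))) ≤ sup_{θ ∈ ∂B(0,r)} |u(θ)−v(θ)|; and (ii) there is a constant C = C(n,s,p) such that, with σ₀ := max{p−1, sp}, [w]_{W^{s,p}(B(0,2r))}^p ≤ [u]_{W^{s,p}(B(0,2r)∖B(0,r))}^p + C ( [v]_{W^{s,p}(B(0,r))}^p + δ^{−sp} r (A+B) + δ r D + δ^{−σ₀} r^{n−sp} (sup_{θ∈∂B(0,r)} |u(θ)−v(θ)|)^p ). -/

import Mathlib

open MeasureTheory Classical
open scoped ENNReal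

noncomputable section

/-- Euclidean space `ℝᵏ`. -/
abbrev Euc (k : ℕ) : Type _ := EuclideanSpace ℝ (Fin k)

/-- The (unrooted) Gagliardo energy `∫_A∫_A |f(x)-f(y)|^p / |x-y|^{n+sp} dx dy ∈ [0,∞]`,
so that `[f]_{W^{s,p}(A)}^p = gagEnergy n M s p A f`. -/
def gagEnergy (n M : ℕ) (s p : ℝ) (A : Set (Euc n)) (f : Euc n → Euc M) : ℝ≥0∞ :=
  ∫⁻ x in A, ∫⁻ y in A, ENNReal.ofReal (‖f x - f y‖ ^ p / ‖x - y‖ ^ ((n : ℝ) + s * p))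

/-- The Luckhaus-type gluing of `u` (outside `B(0,r)`) and `v` (inside `B(0,(1-δ)r)`,
suitably rescaled), interpolated on the annulus via the cutoff `η`. -/
def glue (n M : ℕ) (r δ : ℝ) (η : ℝ → ℝ) (u v : Euc n → Euc M) (x : Euc n) : Euc M :=
  if r ≤ ‖x‖ then u x
  else if ‖x‖ ≤ (1 - δ) * r then v ((1 - δ)⁻¹ • x)
  else (1 - η ‖x‖) • u ((r / ‖x‖) • x) + η ‖x‖ • v ((r / ‖x‖) • x)

/-! Rescaling reduces everything to `r = 1`. Write `w` for the glued map and split `B(0,2)` into the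
exterior `B(0,2) ∖ B(0,1)`, the annulus and the inner ball `B(0,1-δ)`.

* On the annulus `w` interpolates between the `0`-homogeneous extensions of the traces of `u` and
  `v`. In polar coordinates the energy of such an extension is `δ` times that of its trace, up to a
  constant, and the cutoff contributes `δ ^ (-sp) * sup |u - v| ^ p`.
* The energy of the trace of `v` is bounded by `B`: for `θ, ω` on the sphere compare `v θ` and `v ω`
  with `v y`, and average over the interior points `y` with `|θ - y| ≤ |θ - ω| / 2`.
* For `x` outside and `y` inside, compare `u x` and `v y` with the traces at a point `θ`
  averaged over the part of the sphere within distance `2 * (1 - |y|)` of `y`.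
* The kernel `|θ - y| ^ (-n-sp)` is not integrable in `y` up to the sphere, so finiteness of `B`
  forces `v θ` into the closure of `v (B(0,1))` for almost every, hence by continuity every, `θ`. -/

open Set Metric Module
open scoped NNReal

universe v

section UnitSphere

variable {E : Type*} [NormedAddCommGroup E] [NormedSpace ℝ E]

lemma norm_smul_sub_self {θ : E} (hθ : ‖θ‖ = 1) (ρ : ℝ) : ‖ρ • θ - θ‖ = |ρ - 1| := by
  rw [show ρ • θ - θ = (ρ - 1) • θ by rw [sub_smul, one_smul], norm_smul, hθ, mul_one,
    Real.norm_eq_abs]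

lemma ball_subset_preimage_two_inv_smul_ball {θ : E} (hθ : ‖θ‖ = 1) :
    ball θ 1 ⊆ ((2⁻¹ : ℝ) • · : E → E) ⁻¹' ball θ 1 := by
  intro x hx
  rw [mem_ball_iff_norm] at hx
  rw [mem_preimage, mem_ball_iff_norm]
  calc ‖(2⁻¹ : ℝ) • x - θ‖ = ‖(2⁻¹ : ℝ) • (x - θ) - (2⁻¹ : ℝ) • θ‖ := by
        congr 1
        module
    _ ≤ 2⁻¹ * ‖x - θ‖ + 2⁻¹ * ‖θ‖ := by
        grw [norm_sub_le, norm_smul, norm_smul, Real.norm_of_nonneg (by positivity)]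
    _ < 1 := by linarith

lemma norm_smul_of_norm_eq_one {θ : E} (hθ : ‖θ‖ = 1) {ρ : ℝ} (hρ : 0 ≤ ρ) : ‖ρ • θ‖ = ρ := by
  rw [norm_smul, hθ, mul_one, Real.norm_of_nonneg hρ]

variable [MeasurableSpace E]

/-- The surface measure of the unit sphere, seen as a measure on the whole space. -/
def sphereMeasure (μ : Measure E) : Measure E :=
  μ.toSphere.map (Subtype.val : sphere (0 : E) 1 → E)

variable [BorelSpace E]

lemma ae_norm_eq_one_sphereMeasure (μ : Measure E) : ∀ᵐ θ ∂sphereMeasure μ, ‖θ‖ = 1 := by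
  rw [sphereMeasure, ae_map_iff (by fun_prop) (measurableSet_eq_fun (by fun_prop) (by fun_prop))]
  exact .of_forall fun θ ↦ norm_eq_of_mem_sphere θ

lemma restrict_sphere_sphereMeasure (μ : Measure E) :
    (sphereMeasure μ).restrict (sphere 0 1) = sphereMeasure μ :=
  Measure.restrict_eq_self_of_ae_mem <| by
    simpa using ae_norm_eq_one_sphereMeasure μ

variable [FiniteDimensional ℝ E]

lemma setLIntegral_eq_mul_setLIntegral_comp_smul (μ : Measure E) [μ.IsAddHaarMeasure] {c : ℝ}
    (hc : 0 < c) (A : Set E) (f : E → ℝ≥0∞) :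
    ∫⁻ x in A, f x ∂μ =
      ENNReal.ofReal (c ^ finrank ℝ E) * ∫⁻ x in (c • ·) ⁻¹' A, f (c • x) ∂μ := by
  have hemb : MeasurableEmbedding (c • · : E → E) := measurableEmbedding_const_smul₀ hc.ne'
  rw [← hemb.lintegral_map, ← hemb.restrict_map, Measure.map_addHaar_smul μ hc.ne',
    Measure.restrict_smul, lintegral_smul_measure, smul_eq_mul, ← mul_assoc,
    ← ENNReal.ofReal_mul (by positivity), abs_of_pos (by positivity),
    mul_inv_cancel₀ (by positivity), ENNReal.ofReal_one, one_mul]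

lemma lintegral_eq_mul_lintegral_comp_smul (μ : Measure E) [μ.IsAddHaarMeasure] {c : ℝ}
    (hc : 0 < c) (f : E → ℝ≥0∞) :
    ∫⁻ x, f x ∂μ = ENNReal.ofReal (c ^ finrank ℝ E) * ∫⁻ x, f (c • x) ∂μ := by
  simpa using setLIntegral_eq_mul_setLIntegral_comp_smul μ hc univ f

lemma exists_lintegral_add_norm_sub_rpow_neg_le (μ : Measure E) [μ.IsAddHaarMeasure] {q : ℝ}
    (hq : finrank ℝ E < q) :
    ∃ C : ℝ≥0, ∀ a : ℝ, 0 < a → ∀ c : E,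
      ∫⁻ x, ENNReal.ofReal ((a + ‖x - c‖) ^ (-q)) ∂μ ≤
        C * ENNReal.ofReal (a ^ ((finrank ℝ E : ℝ) - q)) := by
  have hfin := finite_integral_one_add_norm (μ := μ) hq
  refine ⟨(∫⁻ x, ENNReal.ofReal ((1 + ‖x‖) ^ (-q)) ∂μ).toNNReal, fun a ha c ↦ ?_⟩
  have hscale (x : E) : ENNReal.ofReal ((a + ‖a • x‖) ^ (-q)) =
      ENNReal.ofReal (a ^ (-q)) * ENNReal.ofReal ((1 + ‖x‖) ^ (-q)) := by
    rw [norm_smul, Real.norm_of_nonneg ha.le, ← ENNReal.ofReal_mul (by positivity),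
      ← Real.mul_rpow ha.le (by positivity), mul_add, mul_one]
  rw [ENNReal.coe_toNNReal hfin.ne,
    lintegral_sub_right_eq_self (fun x ↦ ENNReal.ofReal ((a + ‖x‖) ^ (-q))) c,
    lintegral_eq_mul_lintegral_comp_smul μ ha]
  simp_rw [hscale]
  rw [lintegral_const_mul _ (by fun_prop), ← mul_assoc, ← ENNReal.ofReal_mul (by positivity),
    mul_comm, ← Real.rpow_natCast, ← Real.rpow_add ha, sub_eq_add_neg]

instance (μ : Measure E) [μ.IsAddHaarMeasure] : IsFiniteMeasure (sphereMeasure μ) := by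
  unfold sphereMeasure; infer_instance

lemma sphereMeasure_ball_pos (μ : Measure E) [μ.IsAddHaarMeasure] {θ : E} (hθ : ‖θ‖ = 1) {b : ℝ}
    (hb : 0 < b) : 0 < sphereMeasure μ (ball θ b) := by
  rw [sphereMeasure, Measure.map_apply measurable_subtype_coe measurableSet_ball]
  exact (isOpen_ball.preimage continuous_subtype_val).measure_pos _
    ⟨⟨θ, by simpa using hθ⟩, mem_ball_self hb⟩

variable [Nontrivial E] (μ : Measure E) [μ.IsAddHaarMeasure]

lemma lintegral_eq_lintegral_sphereMeasure {f : E → ℝ≥0∞} (hf : Measurable f) :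
    ∫⁻ x, f x ∂μ = ∫⁻ θ, (∫⁻ ρ in Ioi (0 : ℝ),
      ENNReal.ofReal (ρ ^ (finrank ℝ E - 1)) * f (ρ • θ)) ∂sphereMeasure μ := by
  have hpolar : Measurable fun z : sphere (0 : E) 1 × Ioi (0 : ℝ) ↦ f (z.2.1 • z.1.1) := by fun_prop
  calc ∫⁻ x, f x ∂μ
      = ∫⁻ x : ({0}ᶜ : Set E), f x ∂μ.comap Subtype.val := by
        rw [lintegral_subtype_comap (measurableSet_singleton _).compl, restrict_compl_singleton]
    _ = ∫⁻ x : ({0}ᶜ : Set E), (fun z : sphere (0 : E) 1 × Ioi (0 : ℝ) ↦ f (z.2.1 • z.1.1))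
          (homeomorphUnitSphereProd E x) ∂μ.comap Subtype.val := by
        refine lintegral_congr fun x ↦ ?_
        simp [smul_smul, norm_ne_zero_iff.2 x.2]
    _ = ∫⁻ z : sphere (0 : E) 1 × Ioi (0 : ℝ), f (z.2.1 • z.1.1)
          ∂μ.toSphere.prod (.volumeIoiPow (finrank ℝ E - 1)) :=
        μ.measurePreserving_homeomorphUnitSphereProd.lintegral_comp hpolar
    _ = ∫⁻ θ : sphere (0 : E) 1, ∫⁻ ρ : Ioi (0 : ℝ), f (ρ.1 • θ.1)
          ∂Measure.volumeIoiPow (finrank ℝ E - 1) ∂μ.toSphere := by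
        rw [lintegral_prod _ hpolar.aemeasurable]
    _ = ∫⁻ θ : sphere (0 : E) 1, (∫⁻ ρ in Ioi (0 : ℝ),
          ENNReal.ofReal (ρ ^ (finrank ℝ E - 1)) * f (ρ • θ.1)) ∂μ.toSphere := by
        refine lintegral_congr fun θ ↦ ?_
        rw [Measure.volumeIoiPow,
          lintegral_withDensity_eq_lintegral_mul _ (by fun_prop) (by fun_prop)]
        exact lintegral_subtype_comap measurableSet_Ioi
          fun ρ ↦ ENNReal.ofReal (ρ ^ (finrank ℝ E - 1)) * f (ρ • θ.1)
    _ = _ := by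
        rw [sphereMeasure,
          (MeasurableEmbedding.subtype_coe isClosed_sphere.measurableSet).lintegral_map]

lemma lintegral_sphereMeasure_mul_le_lintegral {F G : E → ℝ≥0∞} {t : E → ℝ} (hF : Measurable F)
    (h : ∀ θ, ‖θ‖ = 1 → ∀ ρ, 1 < ρ → ρ < 1 + t θ → G θ ≤ F (ρ • θ)) :
    ∫⁻ θ, G θ * ENNReal.ofReal (t θ) ∂sphereMeasure μ ≤ ∫⁻ x, F x ∂μ := by
  rw [lintegral_eq_lintegral_sphereMeasure μ hF]
  apply lintegral_mono_ae
  filter_upwards [ae_norm_eq_one_sphereMeasure μ] with θ hθ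
  calc G θ * ENNReal.ofReal (t θ) = ∫⁻ _ in Ioo 1 (1 + t θ), G θ := by
        rw [setLIntegral_const, Real.volume_Ioo, add_sub_cancel_left]
    _ ≤ ∫⁻ ρ in Ioo 1 (1 + t θ), ENNReal.ofReal (ρ ^ (finrank ℝ E - 1)) * F (ρ • θ) := by
        refine setLIntegral_mono' measurableSet_Ioo fun ρ hρ ↦ ?_
        exact le_mul_of_one_le_of_le (ENNReal.one_le_ofReal.2 (one_le_pow₀ hρ.1.le))
          (h θ hθ ρ hρ.1 hρ.2)
    _ ≤ _ := lintegral_mono_set fun _ hρ ↦ one_pos.trans hρ.1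

lemma lintegral_le_mul_lintegral_sphereMeasure {F G : E → ℝ≥0∞} {a b : ℝ} (hF : Measurable F)
    (hG : Measurable G)
    (h : ∀ θ, ‖θ‖ = 1 → ∀ ρ, 0 < ρ →
      ENNReal.ofReal (ρ ^ (finrank ℝ E - 1)) * F (ρ • θ) ≤ (Icc a b).indicator (fun _ ↦ G θ) ρ) :
    ∫⁻ x, F x ∂μ ≤ ENNReal.ofReal (b - a) * ∫⁻ θ, G θ ∂sphereMeasure μ := by
  rw [lintegral_eq_lintegral_sphereMeasure μ hF, ← lintegral_const_mul _ hG]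
  apply lintegral_mono_ae
  filter_upwards [ae_norm_eq_one_sphereMeasure μ] with θ hθ
  calc _ ≤ ∫⁻ ρ in Ioi (0 : ℝ), (Icc a b).indicator (fun _ ↦ G θ) ρ :=
        setLIntegral_mono' measurableSet_Ioi fun ρ hρ ↦ h θ hθ ρ hρ
    _ ≤ ∫⁻ ρ, (Icc a b).indicator (fun _ ↦ G θ) ρ := setLIntegral_le_lintegral _ _
    _ = _ := by
        rw [lintegral_indicator measurableSet_Icc, setLIntegral_const, Real.volume_Icc, mul_comm]

lemma setLIntegral_annulus_le {δ : ℝ} {f : E → ℝ≥0∞} (hf : Measurable f) :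
    ∫⁻ x in ball 0 1 \ ball 0 (1 - δ), f x ∂μ ≤
      ∫⁻ θ, (∫⁻ ρ in Ico (1 - δ) 1, f (ρ • θ)) ∂sphereMeasure μ := by
  have hN : MeasurableSet (ball (0 : E) 1 \ ball 0 (1 - δ)) :=
    measurableSet_ball.diff measurableSet_ball
  rw [← lintegral_indicator hN, lintegral_eq_lintegral_sphereMeasure μ (hf.indicator hN)]
  apply lintegral_mono_ae
  filter_upwards [ae_norm_eq_one_sphereMeasure μ] with θ hθ
  rw [← lintegral_indicator measurableSet_Ico]
  refine (setLIntegral_mono' measurableSet_Ioi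
    (g := (Ico (1 - δ) 1).indicator fun ρ ↦ f (ρ • θ)) fun ρ hρ ↦ ?_).trans
    (setLIntegral_le_lintegral _ _)
  have hmem : ρ • θ ∈ ball (0 : E) 1 \ ball 0 (1 - δ) ↔ ρ ∈ Ico (1 - δ) 1 := by
    simp [norm_smul_of_norm_eq_one hθ (le_of_lt hρ), and_comm]
  by_cases hρN : ρ ∈ Ico (1 - δ) 1
  · rw [indicator_of_mem hρN, indicator_of_mem (hmem.2 hρN)]
    exact mul_le_of_le_one_left' (ENNReal.ofReal_le_one.2 (pow_le_one₀ (le_of_lt hρ) hρN.2.le))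
  · rw [indicator_of_notMem (mt hmem.1 hρN), mul_zero]
    exact zero_le

end UnitSphere

lemma le_smul_hausdorffMeasure_of_closedBall_le {X : Type*} [MetricSpace X] [MeasurableSpace X]
    [BorelSpace X] {ν : Measure X} {C : ℝ≥0∞} {m : ℝ} (hC0 : C ≠ 0) (hC : C ≠ ⊤)
    (h : ∀ x d, 0 < d → ν (closedBall x d) ≤ C * ENNReal.ofReal d ^ m) : ν ≤ C • μH[m] := by
  suffices hle : C⁻¹ • ν ≤ μH[m] by
    intro s
    simpa [ENNReal.inv_mul_le_iff hC0 hC] using hle s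
  refine Measure.le_hausdorffMeasure _ _ 1 one_pos fun s hs ↦ ?_
  rcases s.eq_empty_or_nonempty with rfl | ⟨x, hx⟩
  · simp
  have hs_top : ediam s ≠ ⊤ := ne_top_of_le_ne_top ENNReal.one_ne_top hs
  have hsub (ε : ℝ) (hε : diam s < ε) : ν s ≤ C * ENNReal.ofReal ε ^ m := by
    refine (measure_mono fun y hy ↦ ?_).trans (h x ε (diam_nonneg.trans_lt hε))
    exact (dist_le_diam_of_mem' hs_top hy hx).trans hε.le
  have hlim : Filter.Tendsto (fun ε : ℝ ↦ C * ENNReal.ofReal ε ^ m)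
      (nhdsWithin (diam s) (Ioi (diam s))) (nhds (C * ENNReal.ofReal (diam s) ^ m)) :=
    ((ENNReal.continuous_const_mul hC).comp
      (ENNReal.continuous_rpow_const.comp ENNReal.continuous_ofReal)).continuousWithinAt
  have hdiam : ν s ≤ C * ediam s ^ m := by
    rw [← ENNReal.ofReal_toReal hs_top]
    exact ge_of_tendsto hlim (eventually_nhdsWithin_of_forall hsub)
  rwa [Measure.smul_apply, smul_eq_mul, ENNReal.inv_mul_le_iff hC0 hC]

section Caps

variable {E : Type*} [NormedAddCommGroup E] [NormedSpace ℝ E]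

lemma exists_norm_eq_one_norm_sub_eq [Nontrivial E] {y : E} (hy : ‖y‖ ≤ 1) :
    ∃ e : E, ‖e‖ = 1 ∧ ‖e - y‖ = 1 - ‖y‖ := by
  rcases eq_or_ne y 0 with rfl | h0
  · obtain ⟨e, he⟩ := exists_norm_eq E zero_le_one
    exact ⟨e, he, by simp [he]⟩
  · refine ⟨NormedSpace.normalize y, NormedSpace.norm_normalize_eq_one_iff.2 h0, ?_⟩
    nth_rewrite 2 [← NormedSpace.norm_smul_normalize y]
    rw [norm_sub_rev, norm_smul_sub_self (NormedSpace.norm_normalize_eq_one_iff.2 h0),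
      abs_sub_comm, abs_of_nonneg (sub_nonneg.2 hy)]

lemma mem_Icc_and_mem_closedBall_of_smul_mem_ball {θ e y : E} {ρ b : ℝ} (hθ : ‖θ‖ = 1)
    (he : ‖e‖ = 1) (hey : ‖e - y‖ ≤ b) (hρ : 0 < ρ) (h : ρ • θ ∈ ball e (b / 2)) :
    ρ ∈ Icc (1 - b / 2) (1 + b / 2) ∧ θ ∈ closedBall y (2 * b) := by
  rw [mem_ball, dist_eq_norm] at h
  have hρ1 : |ρ - 1| ≤ b / 2 := by
    have := abs_norm_sub_norm_le (ρ • θ) e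
    rw [norm_smul_of_norm_eq_one hθ hρ.le, he] at this
    exact this.trans h.le
  refine ⟨mem_Icc_iff_abs_le.1 (by rwa [abs_sub_comm]), ?_⟩
  rw [mem_closedBall, dist_eq_norm]
  calc ‖θ - y‖ = ‖-(ρ • θ - θ) + (ρ • θ - e) + (e - y)‖ := by congr 1; abel
    _ ≤ |ρ - 1| + b / 2 + b := by
      grw [norm_add_le, norm_add_le, norm_neg, norm_smul_sub_self hθ, h, hey]
    _ ≤ 2 * b := by linarith

lemma norm_sub_rpow_neg_le_of_lt_one_add {q a ρ : ℝ} {x ω : E} (hq : 0 ≤ q) (hω : ‖ω‖ = 1)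
    (ha : 0 < a) (hax : a ≤ ‖x - ω‖) (hρ : 1 < ρ) (hρω : ρ < 1 + ‖x - ω‖) :
    ‖x - ω‖ ^ (-q) ≤ 3 ^ q * (a + ‖ρ • ω - x‖) ^ (-q) := by
  have htri : ‖ρ • ω - x‖ ≤ 2 * ‖x - ω‖ := by
    calc ‖ρ • ω - x‖ ≤ ‖ρ • ω - ω‖ + ‖ω - x‖ := norm_sub_le_norm_sub_add_norm_sub _ _ _
      _ ≤ 2 * ‖x - ω‖ := by
        rw [norm_smul_sub_self hω, abs_of_pos (by linarith), norm_sub_rev ω x]; linarith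
  calc ‖x - ω‖ ^ (-q) = 3 ^ q * (3 * ‖x - ω‖) ^ (-q) := by
        rw [Real.mul_rpow zero_le_three (norm_nonneg _), ← mul_assoc,
          ← Real.rpow_add three_pos, add_neg_cancel, Real.rpow_zero, one_mul]
    _ ≤ 3 ^ q * (a + ‖ρ • ω - x‖) ^ (-q) := by
        gcongr ?_ * ?_
        exact Real.rpow_le_rpow_of_nonpos (by positivity) (by linarith) (neg_nonpos.2 hq)

variable [MeasurableSpace E] [BorelSpace E] [FiniteDimensional ℝ E] [Nontrivial E]
  (μ : Measure E) [μ.IsAddHaarMeasure]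

lemma exists_sphereMeasure_closedBall_le : ∃ C : ℝ≥0, ∀ (x : E) (d : ℝ), 0 < d →
    sphereMeasure μ (closedBall x d) ≤ C * ENNReal.ofReal (d ^ (finrank ℝ E - 1)) := by
  refine ⟨2 ^ finrank ℝ E * (μ (ball 0 1)).toNNReal, fun x d hd ↦ ?_⟩
  have hthick : sphereMeasure μ (closedBall x d) * ENNReal.ofReal d ≤
      μ (closedBall x (2 * d)) := by
    rw [← lintegral_indicator_one measurableSet_closedBall,
      ← lintegral_indicator_one measurableSet_closedBall,
      ← lintegral_mul_const _ (measurable_one.indicator measurableSet_closedBall)]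
    refine lintegral_sphereMeasure_mul_le_lintegral μ (t := fun _ ↦ d)
      (measurable_one.indicator measurableSet_closedBall) fun θ hθ ρ hρ1 hρd ↦ ?_
    refine indicator_apply_le' (fun hθx ↦ ?_) fun _ ↦ zero_le
    suffices hρx : ρ • θ ∈ closedBall x (2 * d) from (indicator_of_mem hρx (1 : E → ℝ≥0∞)).ge
    rw [mem_closedBall, dist_eq_norm] at hθx ⊢
    calc ‖ρ • θ - x‖ ≤ ‖ρ • θ - θ‖ + ‖θ - x‖ := norm_sub_le_norm_sub_add_norm_sub _ _ _
      _ ≤ 2 * d := by rw [norm_smul_sub_self hθ, abs_of_pos (by linarith)]; linarith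
  have hd0 : ENNReal.ofReal d ≠ 0 := by simpa using hd
  rw [← ENNReal.mul_le_mul_iff_left hd0 ENNReal.ofReal_ne_top]
  refine hthick.trans_eq ?_
  push_cast
  rw [Measure.addHaar_closedBall _ _ (by positivity), ENNReal.coe_toNNReal measure_ball_lt_top.ne,
    mul_assoc _ (ENNReal.ofReal _) (ENNReal.ofReal _), ← ENNReal.ofReal_mul (by positivity),
    ← pow_succ, Nat.sub_add_cancel finrank_pos, mul_pow, ENNReal.ofReal_mul (by positivity),
    ENNReal.ofReal_pow zero_le_two, ENNReal.ofReal_ofNat]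
  ring

lemma exists_rpow_le_sphereMeasure_closedBall : ∃ C : ℝ≥0, ∀ y : E, ‖y‖ < 1 →
    ENNReal.ofReal ((1 - ‖y‖) ^ (finrank ℝ E - 1)) ≤
      C * sphereMeasure μ (closedBall y (2 * (1 - ‖y‖))) := by
  set V := μ (ball 0 1)
  have hV : V ≠ ⊤ := measure_ball_lt_top.ne
  have hV0 : V ≠ 0 := (measure_ball_pos _ _ one_pos).ne'
  refine ⟨(2 ^ finrank ℝ E * ENNReal.ofReal ((3 / 2) ^ (finrank ℝ E - 1)) * V⁻¹).toNNReal,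
    fun y hy ↦ ?_⟩
  obtain ⟨e, he, hey⟩ := exists_norm_eq_one_norm_sub_eq hy.le
  set b := 1 - ‖y‖
  have hb0 : 0 < b := sub_pos.2 hy
  have hb1 : b ≤ 1 := sub_le_self _ (norm_nonneg y)
  have hthin : ENNReal.ofReal ((b / 2) ^ finrank ℝ E) * V ≤ ENNReal.ofReal b *
      (ENNReal.ofReal ((3 / 2) ^ (finrank ℝ E - 1)) * sphereMeasure μ (closedBall y (2 * b))) := by
    rw [← Measure.addHaar_ball_of_pos _ e (by positivity), ← lintegral_indicator_one
      measurableSet_ball, ← setLIntegral_const, ← lintegral_indicator measurableSet_closedBall]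
    have hlen : b = 1 + b / 2 - (1 - b / 2) := by ring
    nth_rewrite 2 [hlen]
    refine lintegral_le_mul_lintegral_sphereMeasure μ (measurable_one.indicator measurableSet_ball)
      (measurable_const.indicator measurableSet_closedBall) fun θ hθ ρ hρ ↦ ?_
    by_cases hc : ρ • θ ∈ ball e (b / 2)
    · obtain ⟨hρb, hθy⟩ := mem_Icc_and_mem_closedBall_of_smul_mem_ball hθ he hey.le hρ hc
      rw [indicator_of_mem hc, indicator_of_mem hρb, indicator_of_mem hθy, Pi.one_apply, mul_one]
      gcongr
      linarith [hρb.2]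
    · rw [indicator_of_notMem hc, mul_zero]
      exact zero_le
  have hb : ENNReal.ofReal b ≠ 0 := by simpa using hb0
  rw [← ENNReal.mul_le_mul_iff_right hb ENNReal.ofReal_ne_top, ← ENNReal.ofReal_mul hb0.le,
    mul_pow_sub_one finrank_pos.ne',
    ENNReal.coe_toNNReal (by finiteness)]
  calc ENNReal.ofReal (b ^ finrank ℝ E)
      = 2 ^ finrank ℝ E * (ENNReal.ofReal ((b / 2) ^ finrank ℝ E) * V) * V⁻¹ := by
        rw [← mul_assoc, mul_assoc _ V, ENNReal.mul_inv_cancel hV0 hV, mul_one,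
          ← ENNReal.ofReal_ofNat 2, ← ENNReal.ofReal_pow zero_le_two,
          ← ENNReal.ofReal_mul (by positivity), ← mul_pow, mul_div_cancel₀ _ two_ne_zero]
    _ ≤ _ := by
        grw [hthin]
        exact le_of_eq (by ring)

variable (E) in
/-- The surface measure on the sphere of radius `r` centred at the origin: the Hausdorff measure of
codimension one, restricted to that sphere. -/
abbrev surfaceMeasure (r : ℝ) : Measure E :=
  μH[(finrank ℝ E : ℝ) - 1].restrict (sphere 0 r)

lemma exists_sphereMeasure_le_smul_surfaceMeasure :
    ∃ C : ℝ≥0, sphereMeasure μ ≤ (C : ℝ≥0∞) • surfaceMeasure E 1 := by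
  obtain ⟨C, hC⟩ := exists_sphereMeasure_closedBall_le μ
  refine ⟨C + 1, ?_⟩
  rw [← restrict_sphere_sphereMeasure, ← Measure.restrict_smul]
  refine Measure.restrict_mono le_rfl
    (le_smul_hausdorffMeasure_of_closedBall_le (by simp) ENNReal.coe_ne_top fun x d hd ↦ ?_)
  have hdim : (finrank ℝ E : ℝ) - 1 = (finrank ℝ E - 1 : ℕ) := by
    rw [Nat.cast_sub finrank_pos, Nat.cast_one]
  grw [hC x d hd, hdim, ENNReal.rpow_natCast, ENNReal.ofReal_pow hd.le, ← self_le_add_right C 1]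

lemma exists_setLIntegral_sphereMeasure_compl_ball_le {α : ℝ} (hα : 0 < α) : ∃ C : ℝ≥0,
    ∀ (x : E) (a : ℝ), 0 < a →
      ∫⁻ ω in (ball x a)ᶜ, ENNReal.ofReal ((‖x - ω‖ ^ (finrank ℝ E - 1 + α))⁻¹) ∂sphereMeasure μ ≤
        C * ENNReal.ofReal (a ^ (-α)) := by
  set n := finrank ℝ E
  obtain ⟨C, hC⟩ := exists_lintegral_add_norm_sub_rpow_neg_le μ (lt_add_of_pos_right (n : ℝ) hα)
  refine ⟨Real.toNNReal (3 ^ (n + α)) * C, fun x a ha ↦ ?_⟩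
  calc ∫⁻ ω in (ball x a)ᶜ, ENNReal.ofReal ((‖x - ω‖ ^ (n - 1 + α))⁻¹) ∂sphereMeasure μ
      = ∫⁻ ω, (ball x a)ᶜ.indicator (fun ω ↦ ENNReal.ofReal ((‖x - ω‖ ^ (n + α))⁻¹)) ω *
          ENNReal.ofReal ‖x - ω‖ ∂sphereMeasure μ := by
        rw [← lintegral_indicator measurableSet_ball.compl]
        refine lintegral_congr fun ω ↦ ?_
        by_cases hω : ω ∈ (ball x a)ᶜ
        · have hxω : 0 < ‖x - ω‖ := by
            rw [mem_compl_iff, mem_ball', not_lt, dist_eq_norm] at hω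
            exact ha.trans_le hω
          rw [indicator_of_mem hω, indicator_of_mem hω, ← ENNReal.ofReal_mul (by positivity),
            ← add_sub_right_comm, Real.rpow_sub_one hxω.ne', inv_div, div_eq_inv_mul]
        · rw [indicator_of_notMem hω, indicator_of_notMem hω, zero_mul]
    _ ≤ ∫⁻ y, ENNReal.ofReal (3 ^ (n + α)) * ENNReal.ofReal ((a + ‖y - x‖) ^ (-(n + α))) ∂μ := by
        refine lintegral_sphereMeasure_mul_le_lintegral μ (by fun_prop) fun ω hω ρ hρ hρω ↦
          indicator_apply_le' (fun hxω ↦ ?_) fun _ ↦ zero_le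
        rw [mem_compl_iff, mem_ball', not_lt, dist_eq_norm] at hxω
        rw [← ENNReal.ofReal_mul (by positivity), ← Real.rpow_neg (norm_nonneg _)]
        exact ENNReal.ofReal_le_ofReal
          (norm_sub_rpow_neg_le_of_lt_one_add (by positivity) hω ha hxω hρ hρω)
    _ ≤ _ := by
        rw [lintegral_const_mul _ (by fun_prop), ENNReal.coe_mul, mul_assoc]
        grw [hC a ha x, sub_add_cancel_left]
        rfl

lemma exists_setLIntegral_ball_norm_sub_pow_inv_le : ∃ C : ℝ≥0, ∀ x : E, ‖x‖ ≤ 1 →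
    ∫⁻ y in ball 0 1, ENNReal.ofReal ((‖x - y‖ ^ (finrank ℝ E - 1))⁻¹) ∂μ ≤ C := by
  set f : E → ℝ≥0∞ := (ball 0 2).indicator fun y ↦ ENNReal.ofReal ((‖y‖ ^ (finrank ℝ E - 1))⁻¹)
  have hf : Measurable f := Measurable.indicator (by fun_prop) measurableSet_ball
  refine ⟨(ENNReal.ofReal (2 - 0) * ∫⁻ _, 1 ∂sphereMeasure μ).toNNReal, fun x hx ↦ ?_⟩
  rw [ENNReal.coe_toNNReal (ENNReal.mul_ne_top ENNReal.ofReal_ne_top (by simp))]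
  calc ∫⁻ y in ball 0 1, ENNReal.ofReal ((‖x - y‖ ^ (finrank ℝ E - 1))⁻¹) ∂μ
      ≤ ∫⁻ y, f (x - y) ∂μ := by
        rw [← lintegral_indicator measurableSet_ball]
        refine lintegral_mono fun y ↦ indicator_apply_le' (fun hy ↦ ?_) fun _ ↦ zero_le
        have hxy : x - y ∈ ball (0 : E) 2 := by
          rw [mem_ball_zero_iff] at hy ⊢
          linarith [norm_sub_le x y]
        simp only [f, indicator_of_mem hxy, le_refl]
    _ = ∫⁻ y, f y ∂μ := lintegral_sub_left_eq_self f x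
    _ ≤ _ := by
        refine lintegral_le_mul_lintegral_sphereMeasure μ hf measurable_const fun ω hω ρ hρ ↦ ?_
        have hnorm := norm_smul_of_norm_eq_one hω hρ.le
        by_cases hρω : ρ • ω ∈ ball (0 : E) 2
        · have hρ2 : ρ < 2 := by rwa [mem_ball_zero_iff, hnorm] at hρω
          simp only [f]
          rw [indicator_of_mem hρω, indicator_of_mem (mem_Icc.2 ⟨hρ.le, hρ2.le⟩), hnorm,
            ← ENNReal.ofReal_mul (by positivity), mul_inv_cancel₀ (by positivity),
            ENNReal.ofReal_one]
        · simp only [f, indicator_of_notMem hρω, mul_zero, zero_le]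

end Caps

section Kernels

variable {E F : Type*} [NormedAddCommGroup E] [NormedAddCommGroup F] {p q δ : ℝ}

/-- The integrand of a Gagliardo energy, as a function of the increment `a` of the map and the
increment `d` of the variable. -/
def gagliardoKernel (p q : ℝ) (a : F) (d : E) : ℝ≥0∞ :=
  ENNReal.ofReal (‖a‖ ^ p / ‖d‖ ^ q)

/-- The Gagliardo kernel of the maximal increment of a cut-off with values in `[0, 1]` and
Lipschitz constant `δ⁻¹`. -/
def truncatedKernel (p q δ : ℝ) (d : E) : ℝ≥0∞ :=
  gagliardoKernel p q (min 1 (‖d‖ / δ)) d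

lemma gagliardoKernel_zero_left (hp : p ≠ 0) (d : E) : gagliardoKernel p q (0 : F) d = 0 := by
  simp [gagliardoKernel, hp]

lemma gagliardoKernel_eq_mul (a : F) (d : E) :
    gagliardoKernel p q a d = ENNReal.ofReal (‖a‖ ^ p) * ENNReal.ofReal ((‖d‖ ^ q)⁻¹) := by
  rw [gagliardoKernel, div_eq_mul_inv, ENNReal.ofReal_mul (by positivity)]

lemma gagliardoKernel_eq_rpow_mul (a : F) {d : E} (hd : d ≠ 0) (k : ℝ) :
    gagliardoKernel p q a d = ENNReal.ofReal (‖d‖ ^ k) * gagliardoKernel p (k + q) a d := by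
  have hd_pos : 0 < ‖d‖ := norm_pos_iff.2 hd
  rw [gagliardoKernel, gagliardoKernel, ← ENNReal.ofReal_mul (by positivity),
    Real.rpow_add hd_pos, ← mul_div_assoc, mul_div_mul_left _ _ (by positivity)]

lemma gagliardoKernel_sub_comm (a b : F) (x y : E) :
    gagliardoKernel p q (a - b) (x - y) = gagliardoKernel p q (b - a) (y - x) := by
  rw [gagliardoKernel, norm_sub_rev a, norm_sub_rev x, gagliardoKernel]

lemma gagliardoKernel_mono {F' : Type*} [NormedAddCommGroup F'] (hp : 0 ≤ p) {a : F} {b : F'}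
    (d : E) (h : ‖a‖ ≤ ‖b‖) : gagliardoKernel p q a d ≤ gagliardoKernel p q b d := by
  unfold gagliardoKernel
  gcongr

lemma gagliardoKernel_le_mul_of_norm_le (hp : p ≠ 0) (hq : 0 ≤ q) {c : ℝ} (hc : 0 < c) {a : F}
    {d d' : E} (h0 : d' = 0 → a = 0) (h : ‖d'‖ ≤ c * ‖d‖) :
    gagliardoKernel p q a d ≤ ENNReal.ofReal (c ^ q) * gagliardoKernel p q a d' := by
  rcases eq_or_ne d' 0 with hd' | hd'
  · simp [h0 hd', gagliardoKernel_zero_left hp]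
  have hd'_pos : 0 < ‖d'‖ := norm_pos_iff.2 hd'
  unfold gagliardoKernel
  rw [← ENNReal.ofReal_mul (by positivity)]
  apply ENNReal.ofReal_le_ofReal
  calc ‖a‖ ^ p / ‖d‖ ^ q ≤ ‖a‖ ^ p / (‖d'‖ / c) ^ q := by
        gcongr
        rwa [div_le_iff₀' hc]
    _ = c ^ q * (‖a‖ ^ p / ‖d'‖ ^ q) := by
        rw [Real.div_rpow hd'_pos.le hc.le]
        field_simp

lemma rpow_add_le_mul_rpow_add_rpow {a b : ℝ} (ha : 0 ≤ a) (hb : 0 ≤ b) (hp : 0 ≤ p) :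
    (a + b) ^ p ≤ 2 ^ p * (a ^ p + b ^ p) := by
  have hmax : max a b ^ p ≤ a ^ p + b ^ p := by
    rcases max_choice a b with h | h <;> rw [h]
    · exact le_add_of_nonneg_right (by positivity)
    · exact le_add_of_nonneg_left (by positivity)
  calc (a + b) ^ p ≤ (2 * max a b) ^ p := by
        gcongr
        linarith [le_max_left a b, le_max_right a b]
    _ ≤ 2 ^ p * (a ^ p + b ^ p) := by
        rw [Real.mul_rpow zero_le_two (ha.trans (le_max_left a b))]
        gcongr

lemma gagliardoKernel_add_le (hp : 0 ≤ p) (a b : F) (d : E) :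
    gagliardoKernel p q (a + b) d ≤
      ENNReal.ofReal (2 ^ p) * (gagliardoKernel p q a d + gagliardoKernel p q b d) := by
  unfold gagliardoKernel
  rw [← ENNReal.ofReal_add (by positivity) (by positivity), ← ENNReal.ofReal_mul (by positivity)]
  apply ENNReal.ofReal_le_ofReal
  rw [← add_div, ← mul_div_assoc]
  gcongr
  grw [norm_add_le]
  exact rpow_add_le_mul_rpow_add_rpow (norm_nonneg a) (norm_nonneg b) hp

lemma gagliardoKernel_add_add_le (hp : 0 ≤ p) (a b c : F) (d : E) :
    gagliardoKernel p q (a + b + c) d ≤ ENNReal.ofReal (4 ^ p) *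
      (gagliardoKernel p q a d + gagliardoKernel p q b d + gagliardoKernel p q c d) := by
  have hfour : ENNReal.ofReal (4 ^ p) = ENNReal.ofReal (2 ^ p) * ENNReal.ofReal (2 ^ p) := by
    rw [← ENNReal.ofReal_mul (by positivity), ← Real.mul_rpow zero_le_two zero_le_two]
    norm_num
  have htwo : 1 ≤ ENNReal.ofReal (2 ^ p) :=
    ENNReal.one_le_ofReal.2 (Real.one_le_rpow one_le_two hp)
  set A := gagliardoKernel p q a d
  set B := gagliardoKernel p q b d
  set C := gagliardoKernel p q c d
  calc gagliardoKernel p q (a + b + c) d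
      ≤ ENNReal.ofReal (2 ^ p) * (ENNReal.ofReal (2 ^ p) * (A + B) + C) :=
        (gagliardoKernel_add_le hp _ _ d).trans (by grw [gagliardoKernel_add_le hp])
    _ ≤ ENNReal.ofReal (2 ^ p) * (ENNReal.ofReal (2 ^ p) * (A + B) + ENNReal.ofReal (2 ^ p) * C) :=
        by gcongr; exact le_mul_of_one_le_left zero_le htwo
    _ = ENNReal.ofReal (4 ^ p) * (A + B + C) := by rw [hfour]; ring

lemma gagliardoKernel_smul_le [NormedSpace ℝ F] (hp : 0 ≤ p) (hδ : 0 ≤ δ) {a : F} {S g L : ℝ}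
    {d : E} (ha : ‖a‖ ≤ S) (hL : 0 ≤ L) (hg : |g| ≤ L * min 1 (‖d‖ / δ)) :
    gagliardoKernel p q (g • a) d ≤ ENNReal.ofReal ((L * S) ^ p) * truncatedKernel p q δ d := by
  have hm : 0 ≤ min 1 (‖d‖ / δ) := by positivity
  have hS : 0 ≤ S := (norm_nonneg a).trans ha
  unfold truncatedKernel gagliardoKernel
  rw [← ENNReal.ofReal_mul (by positivity), ← mul_div_assoc, ← Real.mul_rpow (by positivity)
    (norm_nonneg _), Real.norm_of_nonneg hm]
  gcongr
  calc ‖g • a‖ = |g| * ‖a‖ := by rw [norm_smul, Real.norm_eq_abs]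
    _ ≤ L * min 1 (‖d‖ / δ) * S := by gcongr
    _ = L * S * min 1 (‖d‖ / δ) := by ring

variable [MeasurableSpace E] [OpensMeasurableSpace E]

@[fun_prop]
lemma measurable_gagliardoKernel {X : Type*} [MeasurableSpace X] [MeasurableSpace F]
    [OpensMeasurableSpace F] {a : X → F} {d : X → E} (ha : Measurable a) (hd : Measurable d) :
    Measurable fun x ↦ gagliardoKernel p q (a x) (d x) := by
  unfold gagliardoKernel
  fun_prop

@[fun_prop]
lemma measurable_truncatedKernel {X : Type*} [MeasurableSpace X] {d : X → E}
    (hd : Measurable d) : Measurable fun x ↦ truncatedKernel p q δ (d x) := by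
  unfold truncatedKernel
  fun_prop

end Kernels

section MixedEnergy

variable {E F : Type*} [NormedAddCommGroup E] [MeasurableSpace E] [NormedAddCommGroup F] {p q : ℝ}

/-- The double integral of the Gagliardo kernel of `f` against `μ ⊗ ν`. Taking for `μ` and `ν`
restrictions of Lebesgue measure or surface measures, this covers all the energies in the gluing
estimate. -/
def mixedEnergy (p q : ℝ) (μ ν : Measure E) (f : E → F) : ℝ≥0∞ :=
  ∫⁻ x, ∫⁻ y, gagliardoKernel p q (f x - f y) (x - y) ∂ν ∂μ

lemma mixedEnergy_congr {μ ν : Measure E} {f g : E → F} (hμ : f =ᵐ[μ] g) (hν : f =ᵐ[ν] g) :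
    mixedEnergy p q μ ν f = mixedEnergy p q μ ν g := by
  apply lintegral_congr_ae
  filter_upwards [hμ] with x hx
  apply lintegral_congr_ae
  filter_upwards [hν] with y hy
  rw [hx, hy]

lemma mixedEnergy_mono {μ μ' ν ν' : Measure E} (hμ : μ ≤ μ') (hν : ν ≤ ν') (f : E → F) :
    mixedEnergy p q μ ν f ≤ mixedEnergy p q μ' ν' f :=
  lintegral_mono' hμ fun _ ↦ lintegral_mono' hν le_rfl

lemma mixedEnergy_smul_smul (a : ℝ≥0∞) {b : ℝ≥0∞} (hb : b ≠ ∞) (μ ν : Measure E) (f : E → F) :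
    mixedEnergy p q (a • μ) (b • ν) f = a * b * mixedEnergy p q μ ν f := by
  unfold mixedEnergy
  simp_rw [lintegral_smul_measure, smul_eq_mul, lintegral_const_mul' _ _ hb, mul_assoc]

lemma mixedEnergy_add_left (μ μ' ν : Measure E) (f : E → F) :
    mixedEnergy p q (μ + μ') ν f = mixedEnergy p q μ ν f + mixedEnergy p q μ' ν f :=
  lintegral_add_measure _ μ μ'

lemma mixedEnergy_comp_smul [BorelSpace E] [NormedSpace ℝ E] {r : ℝ} (hr : 0 < r)
    (μ ν : Measure E) (f : E → F) :
    mixedEnergy p q μ ν (fun x ↦ f (r • x)) =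
      ENNReal.ofReal (r ^ q) * mixedEnergy p q (μ.map (r • ·)) (ν.map (r • ·)) f := by
  have hemb : MeasurableEmbedding (r • · : E → E) := measurableEmbedding_const_smul₀ hr.ne'
  have hker (a : F) (d : E) :
      gagliardoKernel p q a d = ENNReal.ofReal (r ^ q) * gagliardoKernel p q a (r • d) := by
    unfold gagliardoKernel
    rw [norm_smul, Real.norm_of_nonneg hr.le, ← ENNReal.ofReal_mul (by positivity),
      Real.mul_rpow hr.le (norm_nonneg d), ← mul_div_assoc, mul_div_mul_left _ _ (by positivity)]
  unfold mixedEnergy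
  simp_rw [hemb.lintegral_map, ← smul_sub, hker (_ - _) (_ - _)]
  simp_rw [lintegral_const_mul' _ _ ENNReal.ofReal_ne_top]

variable [BorelSpace E] [SecondCountableTopology E] [MeasurableSpace F] [BorelSpace F]
  [SecondCountableTopology F] {f : E → F}

lemma mixedEnergy_comm {μ ν : Measure E} [SFinite μ] [SFinite ν] (hf : Measurable f) :
    mixedEnergy p q μ ν f = mixedEnergy p q ν μ f := by
  unfold mixedEnergy
  rw [lintegral_lintegral_swap (by fun_prop)]
  simp_rw [gagliardoKernel_sub_comm]

lemma mixedEnergy_add_right (hf : Measurable f) (μ ν ν' : Measure E) [SFinite ν] :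
    mixedEnergy p q μ (ν + ν') f = mixedEnergy p q μ ν f + mixedEnergy p q μ ν' f := by
  unfold mixedEnergy
  simp_rw [lintegral_add_measure]
  exact lintegral_add_left (by fun_prop) _

lemma mixedEnergy_add_self {μ ν : Measure E} [SFinite μ] [SFinite ν] (hf : Measurable f) :
    mixedEnergy p q (μ + ν) (μ + ν) f =
      mixedEnergy p q μ μ f + 2 * mixedEnergy p q μ ν f + mixedEnergy p q ν ν f := by
  rw [mixedEnergy_add_left, mixedEnergy_add_right hf, mixedEnergy_add_right hf,
    mixedEnergy_comm (μ := ν) hf]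
  ring

end MixedEnergy

section KernelIntegrals

variable {E : Type*} [NormedAddCommGroup E] [NormedSpace ℝ E]

lemma norm_sub_add_abs_sub_le {θ ω : E} {ρ τ : ℝ} (hθ : ‖θ‖ = 1) (hω : ‖ω‖ = 1) (hρ : 1 / 2 ≤ ρ)
    (hτ : 0 ≤ τ) : ‖θ - ω‖ + |τ - ρ| ≤ 5 * ‖ρ • θ - τ • ω‖ := by
  have hradial : |τ - ρ| ≤ ‖ρ • θ - τ • ω‖ := by
    have h := abs_norm_sub_norm_le (ρ • θ) (τ • ω)
    rwa [norm_smul_of_norm_eq_one hθ (by linarith), norm_smul_of_norm_eq_one hω hτ, abs_sub_comm]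
      at h
  have hangular : ρ * ‖θ - ω‖ ≤ ‖ρ • θ - τ • ω‖ + |τ - ρ| := by
    calc ρ * ‖θ - ω‖ = ‖(ρ • θ - τ • ω) + (τ - ρ) • ω‖ := by
          rw [show (ρ • θ - τ • ω) + (τ - ρ) • ω = ρ • (θ - ω) by module, norm_smul,
            Real.norm_of_nonneg (by linarith)]
      _ ≤ ‖ρ • θ - τ • ω‖ + |τ - ρ| := by
          grw [norm_add_le, norm_smul, hω, mul_one, Real.norm_eq_abs]
  nlinarith [norm_nonneg (θ - ω)]

lemma exists_setLIntegral_norm_smul_sub_smul_rpow_inv_le {q : ℝ} (hq : 1 < q) : ∃ C : ℝ≥0,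
    ∀ θ ω : E, ‖θ‖ = 1 → ‖ω‖ = 1 → θ ≠ ω → ∀ ρ : ℝ, 1 / 2 ≤ ρ →
      ∫⁻ τ in Ioi (0 : ℝ), ENNReal.ofReal ((‖ρ • θ - τ • ω‖ ^ q)⁻¹) ≤
        C * ENNReal.ofReal ((‖θ - ω‖ ^ (q - 1))⁻¹) := by
  obtain ⟨C, hC⟩ := exists_lintegral_add_norm_sub_rpow_neg_le (volume : Measure ℝ) (q := q)
    (by simpa using hq)
  refine ⟨Real.toNNReal (5 ^ q) * C, fun θ ω hθ hω hne ρ hρ ↦ ?_⟩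
  have ht : 0 < ‖θ - ω‖ := norm_pos_iff.2 (sub_ne_zero.2 hne)
  have hpt : ∀ τ ∈ Ioi (0 : ℝ), ENNReal.ofReal ((‖ρ • θ - τ • ω‖ ^ q)⁻¹) ≤
      ENNReal.ofReal (5 ^ q) * ENNReal.ofReal ((‖θ - ω‖ + ‖τ - ρ‖) ^ (-q)) := by
    intro τ (hτ : 0 < τ)
    have hle := norm_sub_add_abs_sub_le hθ hω hρ hτ.le
    have hpos : 0 < ‖θ - ω‖ + |τ - ρ| := by positivity
    rw [← ENNReal.ofReal_mul (by positivity), Real.norm_eq_abs, Real.rpow_neg hpos.le]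
    apply ENNReal.ofReal_le_ofReal
    rw [← div_eq_mul_inv, ← inv_div, ← Real.div_rpow hpos.le (by norm_num)]
    gcongr
    linarith
  calc ∫⁻ τ in Ioi (0 : ℝ), ENNReal.ofReal ((‖ρ • θ - τ • ω‖ ^ q)⁻¹)
      ≤ ∫⁻ τ, ENNReal.ofReal (5 ^ q) * ENNReal.ofReal ((‖θ - ω‖ + ‖τ - ρ‖) ^ (-q)) :=
        (setLIntegral_mono' measurableSet_Ioi hpt).trans (setLIntegral_le_lintegral _ _)
    _ ≤ ENNReal.ofReal (5 ^ q) * (C * ENNReal.ofReal (‖θ - ω‖ ^ (1 - q))) := by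
        rw [lintegral_const_mul _ (by fun_prop)]
        gcongr
        simpa using hC _ ht ρ
    _ = (Real.toNNReal (5 ^ q) * C : ℝ≥0) * ENNReal.ofReal ((‖θ - ω‖ ^ (q - 1))⁻¹) := by
        rw [← Real.rpow_neg ht.le, neg_sub, ENNReal.coe_mul, mul_assoc]
        rfl

variable [MeasurableSpace E] [BorelSpace E]

@[fun_prop]
lemma measurable_normalize {X : Type*} [MeasurableSpace X] [SecondCountableTopology E] {f : X → E}
    (hf : Measurable f) : Measurable fun x ↦ NormedSpace.normalize (f x) := by
  unfold NormedSpace.normalize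
  fun_prop

variable [FiniteDimensional ℝ E] (μ : Measure E) [μ.IsAddHaarMeasure]

lemma setLIntegral_ball_comp_inv_smul_le {δ : ℝ} (hδ : 0 ≤ δ) (hδ1 : δ < 1) (f : E → ℝ≥0∞) :
    ∫⁻ y in ball 0 (1 - δ), f ((1 - δ)⁻¹ • y) ∂μ ≤ ∫⁻ z in ball 0 1, f z ∂μ := by
  have hc : 0 < (1 - δ)⁻¹ := inv_pos.2 (by linarith)
  rw [setLIntegral_eq_mul_setLIntegral_comp_smul μ hc (ball 0 1) f,
    preimage_smul₀ hc.ne', _root_.smul_ball (inv_ne_zero hc.ne')]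
  simp only [inv_inv, smul_zero, mul_one, Real.norm_of_nonneg (sub_nonneg.2 hδ1.le)]
  refine le_mul_of_one_le_left zero_le (ENNReal.one_le_ofReal.2 (one_le_pow₀ ?_))
  exact (one_le_inv₀ (by linarith)).2 (by linarith)

variable [Nontrivial E]

lemma integrable_min_one_norm_rpow_div {α p : ℝ} (hα : 0 < α) (hαp : α < p) :
    Integrable (fun x : E ↦ min 1 ‖x‖ ^ p / ‖x‖ ^ (finrank ℝ E + α)) μ := by
  have hpow (ρ : ℝ) : ρ ^ (finrank ℝ E - 1) = ρ ^ ((finrank ℝ E : ℝ) - 1) := by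
    rw [← Real.rpow_natCast, Nat.cast_sub finrank_pos, Nat.cast_one]
  rw [integrable_fun_norm_addHaar μ (f := fun ρ ↦ min 1 ρ ^ p / ρ ^ (finrank ℝ E + α)),
    ← Ioc_union_Ioi_eq_Ioi (zero_le_one' ℝ)]
  apply IntegrableOn.union
  · have hint : IntegrableOn (fun ρ : ℝ ↦ ρ ^ (p - 1 - α)) (Ioc 0 1) := by
      rw [← intervalIntegrable_iff_integrableOn_Ioc_of_le zero_le_one]
      exact intervalIntegral.intervalIntegrable_rpow' (by linarith)
    refine hint.congr_fun (fun ρ hρ ↦ ?_) measurableSet_Ioc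
    dsimp only
    rw [smul_eq_mul, min_eq_right hρ.2, hpow, ← Real.rpow_sub hρ.1, ← Real.rpow_add hρ.1]
    ring_nf
  · have hint : IntegrableOn (fun ρ : ℝ ↦ ρ ^ (-1 - α)) (Ioi 1) :=
      integrableOn_Ioi_rpow_of_lt (by linarith) one_pos
    refine hint.congr_fun (fun ρ (hρ : 1 < ρ) ↦ ?_) measurableSet_Ioi
    have hρ0 : 0 < ρ := one_pos.trans hρ
    dsimp only
    rw [smul_eq_mul, min_eq_left hρ.le, hpow, Real.one_rpow, one_div, ← Real.rpow_neg hρ0.le,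
      ← Real.rpow_add hρ0]
    ring_nf

lemma exists_lintegral_truncatedKernel_le {α p : ℝ} (hα : 0 < α) (hαp : α < p) :
    ∃ C : ℝ≥0, ∀ δ : ℝ, 0 < δ → ∀ x : E,
      ∫⁻ y, truncatedKernel p (finrank ℝ E + α) δ (x - y) ∂μ ≤
        C * ENNReal.ofReal (δ ^ (-α)) := by
  set f : E → ℝ := fun x ↦ min 1 ‖x‖ ^ p / ‖x‖ ^ (finrank ℝ E + α)
  refine ⟨(∫⁻ x, ENNReal.ofReal (f x) ∂μ).toNNReal, fun δ hδ x ↦ ?_⟩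
  rw [ENNReal.coe_toNNReal (integrable_min_one_norm_rpow_div μ hα hαp).lintegral_lt_top.ne]
  have hscale (y : E) : truncatedKernel p (finrank ℝ E + α) δ (δ • y) =
      ENNReal.ofReal (δ ^ (-(finrank ℝ E + α))) * ENNReal.ofReal (f y) := by
    unfold truncatedKernel gagliardoKernel
    rw [norm_smul, Real.norm_of_nonneg hδ.le, ← ENNReal.ofReal_mul (by positivity),
      mul_div_cancel_left₀ _ hδ.ne', Real.mul_rpow hδ.le (norm_nonneg y), Real.rpow_neg hδ.le,
      Real.norm_of_nonneg (by positivity), div_mul_eq_div_div_swap, inv_mul_eq_div]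
  apply le_of_eq
  calc ∫⁻ y, truncatedKernel p (finrank ℝ E + α) δ (x - y) ∂μ
      = ENNReal.ofReal (δ ^ finrank ℝ E) *
          ∫⁻ y, truncatedKernel p (finrank ℝ E + α) δ (δ • y) ∂μ := by
        rw [lintegral_sub_left_eq_self (truncatedKernel p (finrank ℝ E + α) δ) x,
          lintegral_eq_mul_lintegral_comp_smul μ hδ]
    _ = ENNReal.ofReal (δ ^ finrank ℝ E) * (ENNReal.ofReal (δ ^ (-(finrank ℝ E + α))) *
          ∫⁻ y, ENNReal.ofReal (f y) ∂μ) := by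
        simp_rw [hscale, lintegral_const_mul' _ _ ENNReal.ofReal_ne_top]
    _ = (∫⁻ y, ENNReal.ofReal (f y) ∂μ) * ENNReal.ofReal (δ ^ (-α)) := by
        rw [← mul_assoc, ← ENNReal.ofReal_mul (by positivity), ← Real.rpow_natCast,
          ← Real.rpow_add hδ, mul_comm]
        congr 3
        ring

lemma setLIntegral_annulus_comp_normalize_le {δ : ℝ} (hδ1 : δ < 1) {G : E → ℝ≥0∞}
    (hG : Measurable G) :
    ∫⁻ y in ball 0 1 \ ball 0 (1 - δ), G (NormedSpace.normalize y) ∂μ ≤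
      ENNReal.ofReal δ * ∫⁻ θ, G θ ∂sphereMeasure μ := by
  refine (setLIntegral_annulus_le μ (by fun_prop)).trans ?_
  rw [← lintegral_const_mul _ hG]
  apply lintegral_mono_ae
  filter_upwards [ae_norm_eq_one_sphereMeasure μ] with θ hθ
  apply le_of_eq
  calc ∫⁻ ρ in Ico (1 - δ) 1, G (NormedSpace.normalize (ρ • θ))
      = ∫⁻ _ in Ico (1 - δ) 1, G θ := by
        refine setLIntegral_congr_fun measurableSet_Ico fun ρ hρ ↦ ?_
        rw [NormedSpace.normalize_smul_of_pos (by linarith [hρ.1]),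
          NormedSpace.normalize_eq_self_of_norm_eq_one hθ]
    _ = ENNReal.ofReal δ * G θ := by
        rw [setLIntegral_const, Real.volume_Ico, mul_comm, sub_sub_cancel]

lemma exists_setLIntegral_annulus_gagliardoKernel_le {α p : ℝ} (hα : 0 < α) (hp : p ≠ 0) :
    ∃ C : ℝ≥0, ∀ {F : Type v} [NormedAddCommGroup F] [MeasurableSpace F] [BorelSpace F]
      [SecondCountableTopology F] {f : E → F}, Measurable f →
      ∀ δ : ℝ, δ < 1 → ∀ θ : E, ‖θ‖ = 1 → ∀ ρ : ℝ, 1 / 2 ≤ ρ →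
        ∫⁻ y in ball 0 1 \ ball 0 (1 - δ), gagliardoKernel p (finrank ℝ E + α)
            (f θ - f (NormedSpace.normalize y)) (ρ • θ - y) ∂μ ≤
          C * ∫⁻ ω, gagliardoKernel p (finrank ℝ E - 1 + α) (f θ - f ω) (θ - ω)
            ∂sphereMeasure μ := by
  have hdim : (1 : ℝ) ≤ finrank ℝ E := by exact_mod_cast finrank_pos (R := ℝ) (M := E)
  obtain ⟨C, hC⟩ := exists_setLIntegral_norm_smul_sub_smul_rpow_inv_le (E := E)
    (q := finrank ℝ E + α) (by linarith)
  refine ⟨C, fun {F} _ _ _ _ {f} hf δ hδ1 θ hθ ρ hρ ↦ ?_⟩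
  refine (setLIntegral_annulus_le μ (by fun_prop)).trans ?_
  rw [← lintegral_const_mul _ (by fun_prop)]
  apply lintegral_mono_ae
  filter_upwards [ae_norm_eq_one_sphereMeasure μ] with ω hω
  calc ∫⁻ τ in Ico (1 - δ) 1, gagliardoKernel p (finrank ℝ E + α)
          (f θ - f (NormedSpace.normalize (τ • ω))) (ρ • θ - τ • ω)
      ≤ ∫⁻ τ in Ioi (0 : ℝ), gagliardoKernel p (finrank ℝ E + α)
          (f θ - f (NormedSpace.normalize (τ • ω))) (ρ • θ - τ • ω) :=
        lintegral_mono_set fun τ hτ ↦ (sub_pos.2 hδ1).trans_le hτ.1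
    _ = ENNReal.ofReal (‖f θ - f ω‖ ^ p) *
          ∫⁻ τ in Ioi (0 : ℝ), ENNReal.ofReal ((‖ρ • θ - τ • ω‖ ^ (finrank ℝ E + α))⁻¹) := by
        rw [← lintegral_const_mul _ (by fun_prop)]
        refine setLIntegral_congr_fun measurableSet_Ioi fun τ (hτ : 0 < τ) ↦ ?_
        rw [NormedSpace.normalize_smul_of_pos hτ,
          NormedSpace.normalize_eq_self_of_norm_eq_one hω, gagliardoKernel_eq_mul]
    _ ≤ C * gagliardoKernel p (finrank ℝ E - 1 + α) (f θ - f ω) (θ - ω) := by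
        rcases eq_or_ne θ ω with rfl | hne
        · simp [hp]
        grw [hC θ ω hθ hω hne ρ hρ, gagliardoKernel_eq_mul, mul_left_comm, add_sub_right_comm]

lemma exists_mixedEnergy_annulus_comp_normalize_le {α p : ℝ} (hα : 0 < α) (hp : p ≠ 0) :
    ∃ C : ℝ≥0, ∀ {F : Type v} [NormedAddCommGroup F] [MeasurableSpace F] [BorelSpace F]
      [SecondCountableTopology F] {f : E → F}, Measurable f → ∀ δ : ℝ, δ ≤ 1 / 2 →
        mixedEnergy p (finrank ℝ E + α) (μ.restrict (ball 0 1 \ ball 0 (1 - δ)))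
            (μ.restrict (ball 0 1 \ ball 0 (1 - δ))) (fun x ↦ f (NormedSpace.normalize x)) ≤
          C * (ENNReal.ofReal δ *
            mixedEnergy p (finrank ℝ E - 1 + α) (sphereMeasure μ) (sphereMeasure μ) f) := by
  obtain ⟨C, hC⟩ := exists_setLIntegral_annulus_gagliardoKernel_le.{v} μ hα hp
  refine ⟨C, fun {F} _ _ _ _ {f} hf δ hδ ↦ ?_⟩
  set G : E → ℝ≥0∞ := fun θ ↦ ∫⁻ ω,
    gagliardoKernel p (finrank ℝ E - 1 + α) (f θ - f ω) (θ - ω) ∂sphereMeasure μ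
  have hG : Measurable G := Measurable.lintegral_prod_right (by fun_prop)
  calc mixedEnergy p (finrank ℝ E + α) (μ.restrict (ball 0 1 \ ball 0 (1 - δ)))
          (μ.restrict (ball 0 1 \ ball 0 (1 - δ))) (fun x ↦ f (NormedSpace.normalize x))
      ≤ ∫⁻ x in ball 0 1 \ ball 0 (1 - δ), C * G (NormedSpace.normalize x) ∂μ := by
        refine setLIntegral_mono' (measurableSet_ball.diff measurableSet_ball) fun x hx ↦ ?_
        have hx_half : 1 / 2 ≤ ‖x‖ := by
          have hx_inner : 1 - δ ≤ ‖x‖ := by simpa using hx.2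
          linarith
        have hθ : ‖NormedSpace.normalize x‖ = 1 :=
          NormedSpace.norm_normalize_eq_one_iff.2 (norm_pos_iff.1 (by linarith))
        simpa only [NormedSpace.norm_smul_normalize] using
          hC hf δ (by linarith) _ hθ ‖x‖ hx_half
    _ ≤ C * (ENNReal.ofReal δ * ∫⁻ θ, G θ ∂sphereMeasure μ) := by
        rw [lintegral_const_mul _ (by fun_prop)]
        grw [setLIntegral_annulus_comp_normalize_le μ (by linarith) hG]

end KernelIntegrals

section TraceEstimate

lemma lintegral_lintegral_add_swap {X : Type*} [MeasurableSpace X] {μ : Measure X} [SFinite μ]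
    {G : X → X → ℝ≥0∞} (hG : Measurable fun z : X × X ↦ G z.1 z.2) :
    ∫⁻ x, ∫⁻ y, (G x y + G y x) ∂μ ∂μ = 2 * ∫⁻ x, ∫⁻ y, G x y ∂μ ∂μ := by
  have hGx (x : X) : Measurable fun y ↦ G x y := hG.comp measurable_prodMk_left
  simp_rw [fun x ↦ lintegral_add_left (μ := μ) (hGx x) fun y ↦ G y x]
  rw [lintegral_add_left (Measurable.lintegral_prod_right hG),
    lintegral_lintegral_swap (f := fun x y ↦ G y x) (hG.comp measurable_swap).aemeasurable, two_mul]

variable {E F : Type*} [NormedAddCommGroup E] [NormedAddCommGroup F] {p q α : ℝ} {v : E → F}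

/-- The part of the increment `v θ - v ω` between two points of the unit sphere that is charged
to the point `z` of the unit ball when `v θ - v ω` is averaged over all `z` that are closer to `θ`
than `ω` is. -/
def averagingKernel (p q : ℝ) (v : E → F) (θ ω z : E) : ℝ≥0∞ :=
  (ball θ (‖θ - z‖ / 2))ᶜ.indicator (fun ω' ↦ gagliardoKernel p q (v θ - v z) (θ - ω')) ω

lemma gagliardoKernel_le_averagingKernel_add (hp : 0 ≤ p) {θ ω z : E}
    (hz : ‖θ - z‖ ≤ ‖θ - ω‖ / 2) :
    gagliardoKernel p q (v θ - v ω) (θ - ω) ≤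
      ENNReal.ofReal (2 ^ p) * (averagingKernel p q v θ ω z + averagingKernel p q v ω θ z) := by
  have hθ : ω ∈ (ball θ (‖θ - z‖ / 2))ᶜ := by
    rw [mem_compl_iff, mem_ball, not_lt, dist_comm, dist_eq_norm]
    linarith [norm_nonneg (θ - z)]
  have hω : θ ∈ (ball ω (‖ω - z‖ / 2))ᶜ := by
    rw [mem_compl_iff, mem_ball, not_lt, dist_eq_norm]
    linarith [norm_sub_le_norm_sub_add_norm_sub ω θ z, norm_sub_rev ω θ, norm_nonneg (θ - ω)]
  rw [averagingKernel, averagingKernel, indicator_of_mem hθ, indicator_of_mem hω,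
    gagliardoKernel_sub_comm (v ω), ← sub_add_sub_cancel (v θ) (v z) (v ω)]
  exact gagliardoKernel_add_le hp _ _ _

variable [NormedSpace ℝ E]

lemma ball_smul_subset_ball_inter_closedBall {θ : E} (hθ : ‖θ‖ = 1) {b : ℝ} (hb : b ≤ 1) :
    ball ((1 - b) • θ) b ⊆ ball 0 1 ∩ closedBall θ (2 * b) := by
  have hcenter : ‖(1 - b) • θ‖ = 1 - b := norm_smul_of_norm_eq_one hθ (by linarith)
  have hdist (hb0 : 0 < b) : ‖(1 - b) • θ - θ‖ = b := by
    rw [norm_smul_sub_self hθ, sub_sub_cancel_left, abs_neg, abs_of_pos hb0]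
  intro z hz
  have hb0 : 0 < b := pos_of_mem_ball hz
  rw [mem_ball_iff_norm] at hz
  rw [mem_inter_iff, mem_ball_zero_iff, mem_closedBall_iff_norm]
  constructor
  · linarith [norm_le_norm_add_norm_sub' z ((1 - b) • θ)]
  · linarith [norm_sub_le_norm_sub_add_norm_sub z ((1 - b) • θ) θ, hdist hb0]

variable [MeasurableSpace E] [BorelSpace E] [FiniteDimensional ℝ E]

section Measurability

variable [MeasurableSpace F] [BorelSpace F] [SecondCountableTopology F]

@[fun_prop]
lemma measurable_averagingKernel {X : Type*} [MeasurableSpace X] (hv : Measurable v)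
    {θ ω z : X → E} (hθ : Measurable θ) (hω : Measurable ω) (hz : Measurable z) :
    Measurable fun x ↦ averagingKernel p q v (θ x) (ω x) (z x) := by
  have hset : MeasurableSet {x | ω x ∈ (ball (θ x) (‖θ x - z x‖ / 2))ᶜ} := by
    simp only [mem_compl_iff, mem_ball, not_lt]
    exact measurableSet_le (by fun_prop) (by fun_prop)
  exact Measurable.ite hset (by fun_prop) measurable_const

end Measurability

variable (μ : Measure E) [μ.IsAddHaarMeasure]

lemma measure_ball_mul_gagliardoKernel_le (hp : 0 < p) {θ ω : E} (hθ : ‖θ‖ = 1) (hω : ‖ω‖ = 1) :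
    μ (ball 0 1) * gagliardoKernel p (finrank ℝ E - 1 + α) (v θ - v ω) (θ - ω) ≤
      ENNReal.ofReal (4 ^ finrank ℝ E * 2 ^ p) * ∫⁻ z in ball 0 1,
        (averagingKernel p (finrank ℝ E + (finrank ℝ E - 1 + α)) v θ ω z +
          averagingKernel p (finrank ℝ E + (finrank ℝ E - 1 + α)) v ω θ z) ∂μ := by
  rcases eq_or_ne θ ω with rfl | hne
  · simp [gagliardoKernel_zero_left hp.ne']
  set n := finrank ℝ E
  set t := ‖θ - ω‖
  have ht : 0 < t := norm_pos_iff.2 (sub_ne_zero.2 hne)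
  have ht2 : t ≤ 2 := by linarith [norm_sub_le θ ω]
  set Z := ball ((1 - t / 4) • θ) (t / 4)
  have hZ : Z ⊆ ball 0 1 ∩ closedBall θ (2 * (t / 4)) :=
    ball_smul_subset_ball_inter_closedBall hθ (by linarith)
  have hZ_measure : μ Z = ENNReal.ofReal ((t / 4) ^ n) * μ (ball 0 1) :=
    μ.addHaar_ball_of_pos _ (by positivity)
  set q : ℝ := n + (n - 1 + α)
  have hker : gagliardoKernel p (n - 1 + α) (v θ - v ω) (θ - ω) =
      ENNReal.ofReal (t ^ n) * gagliardoKernel p q (v θ - v ω) (θ - ω) := by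
    rw [gagliardoKernel_eq_rpow_mul _ (sub_ne_zero.2 hne) n, Real.rpow_natCast]
  have hvolume : μ (ball 0 1) * ENNReal.ofReal (t ^ n) = ENNReal.ofReal (4 ^ n) * μ Z := by
    rw [hZ_measure, ← mul_assoc, ← ENNReal.ofReal_mul (by positivity), ← mul_pow,
      mul_div_cancel₀ _ four_ne_zero, mul_comm]
  have hZ_kernel : ∀ z ∈ Z, gagliardoKernel p q (v θ - v ω) (θ - ω) ≤
      ENNReal.ofReal (2 ^ p) * (averagingKernel p q v θ ω z + averagingKernel p q v ω θ z) := by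
    intro z hz
    refine gagliardoKernel_le_averagingKernel_add hp.le ?_
    linarith [mem_closedBall_iff_norm'.1 (hZ hz).2]
  calc μ (ball 0 1) * gagliardoKernel p (n - 1 + α) (v θ - v ω) (θ - ω)
      = ENNReal.ofReal (4 ^ n) * ∫⁻ _ in Z, gagliardoKernel p q (v θ - v ω) (θ - ω) ∂μ := by
        rw [hker, setLIntegral_const, ← mul_assoc, hvolume, mul_assoc, mul_comm (μ Z)]
    _ ≤ ENNReal.ofReal (4 ^ n) * (ENNReal.ofReal (2 ^ p) *
          ∫⁻ z in Z, (averagingKernel p q v θ ω z + averagingKernel p q v ω θ z) ∂μ) := by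
        gcongr ENNReal.ofReal _ * ?_
        rw [← lintegral_const_mul' _ _ ENNReal.ofReal_ne_top]
        exact setLIntegral_mono' measurableSet_ball hZ_kernel
    _ ≤ ENNReal.ofReal (4 ^ n * 2 ^ p) *
          ∫⁻ z in ball 0 1, (averagingKernel p q v θ ω z + averagingKernel p q v ω θ z) ∂μ := by
        rw [ENNReal.ofReal_mul (by positivity), ← mul_assoc]
        gcongr
        exact fun z hz ↦ (hZ hz).1

variable [Nontrivial E]

lemma exists_lintegral_averagingKernel_le (p : ℝ) (hα : 0 < α) : ∃ C : ℝ≥0,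
    ∀ {F : Type v} [NormedAddCommGroup F] (v : E → F) (θ z : E), ‖θ‖ = 1 → ‖z‖ < 1 →
      ∫⁻ ω, averagingKernel p (finrank ℝ E + (finrank ℝ E - 1 + α)) v θ ω z ∂sphereMeasure μ ≤
        C * gagliardoKernel p (finrank ℝ E + α) (v θ - v z) (θ - z) := by
  obtain ⟨C, hC⟩ := exists_setLIntegral_sphereMeasure_compl_ball_le μ
    (α := finrank ℝ E + α) (by positivity)
  refine ⟨C * Real.toNNReal (2 ^ (finrank ℝ E + α)), fun {F} _ v θ z hθ hz ↦ ?_⟩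
  have hpos : 0 < ‖θ - z‖ := norm_pos_iff.2 (sub_ne_zero.2 fun h ↦ hz.ne (h ▸ hθ))
  calc ∫⁻ ω, averagingKernel p (finrank ℝ E + (finrank ℝ E - 1 + α)) v θ ω z ∂sphereMeasure μ
      = ENNReal.ofReal (‖v θ - v z‖ ^ p) * ∫⁻ ω in (ball θ (‖θ - z‖ / 2))ᶜ, ENNReal.ofReal
          ((‖θ - ω‖ ^ (finrank ℝ E - 1 + (finrank ℝ E + α)))⁻¹) ∂sphereMeasure μ := by
        unfold averagingKernel
        rw [lintegral_indicator measurableSet_ball.compl]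
        simp_rw [gagliardoKernel_eq_mul]
        rw [lintegral_const_mul' _ _ ENNReal.ofReal_ne_top, add_left_comm]
    _ ≤ ENNReal.ofReal (‖v θ - v z‖ ^ p) *
          (C * ENNReal.ofReal ((‖θ - z‖ / 2) ^ (-(finrank ℝ E + α)))) := by
        gcongr
        exact hC θ _ (by positivity)
    _ = (C * Real.toNNReal (2 ^ (finrank ℝ E + α)) : ℝ≥0) *
          gagliardoKernel p (finrank ℝ E + α) (v θ - v z) (θ - z) := by
        rw [gagliardoKernel_eq_mul, Real.rpow_neg (by positivity),
          Real.div_rpow hpos.le zero_le_two, inv_div, div_eq_mul_inv,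
          ENNReal.ofReal_mul (by positivity), ENNReal.coe_mul, ← ENNReal.ofReal]
        ring

theorem exists_mixedEnergy_sphereMeasure_le (hα : 0 < α) (hp : 0 < p) : ∃ C : ℝ≥0,
    ∀ {F : Type v} [NormedAddCommGroup F] [MeasurableSpace F] [BorelSpace F]
      [SecondCountableTopology F] {v : E → F}, Measurable v →
      mixedEnergy p (finrank ℝ E - 1 + α) (sphereMeasure μ) (sphereMeasure μ) v ≤
        C * mixedEnergy p (finrank ℝ E + α) (sphereMeasure μ) (μ.restrict (ball 0 1)) v := by
  obtain ⟨C, hC⟩ := exists_lintegral_averagingKernel_le.{v} μ p hα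
  set V := μ (ball (0 : E) 1)
  have hV : V ≠ 0 := (measure_ball_pos μ 0 one_pos).ne'
  set c := ENNReal.ofReal (4 ^ finrank ℝ E * 2 ^ p)
  have hK : V⁻¹ * c * 2 * C ≠ ⊤ := by finiteness
  refine ⟨(V⁻¹ * c * 2 * C).toNNReal, fun {F} _ _ _ _ {v} hv ↦ ?_⟩
  set q : ℝ := finrank ℝ E + (finrank ℝ E - 1 + α)
  set G : E → E → ℝ≥0∞ := fun θ ω ↦ ∫⁻ z in ball 0 1, averagingKernel p q v θ ω z ∂μ
  have hG : Measurable fun x : E × E ↦ G x.1 x.2 := Measurable.lintegral_prod_right (by fun_prop)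
  have hG_inner : ∀ᵐ θ ∂sphereMeasure μ, ∫⁻ ω, G θ ω ∂sphereMeasure μ ≤
      C * ∫⁻ z in ball 0 1, gagliardoKernel p (finrank ℝ E + α) (v θ - v z) (θ - z) ∂μ := by
    filter_upwards [ae_norm_eq_one_sphereMeasure μ] with θ hθ
    rw [lintegral_lintegral_swap (by fun_prop), ← lintegral_const_mul' _ _ ENNReal.coe_ne_top]
    exact setLIntegral_mono' measurableSet_ball fun z hz ↦ hC v θ z hθ (mem_ball_zero_iff.1 hz)
  have hV_mul : V * mixedEnergy p (finrank ℝ E - 1 + α) (sphereMeasure μ) (sphereMeasure μ) v ≤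
      c * (2 * (C *
        mixedEnergy p (finrank ℝ E + α) (sphereMeasure μ) (μ.restrict (ball 0 1)) v)) := by
    unfold mixedEnergy
    grw [← lintegral_const_mul' _ _ ENNReal.coe_ne_top, ← lintegral_mono_ae hG_inner,
      ← lintegral_lintegral_add_swap hG, ← lintegral_const_mul' _ _ measure_ball_lt_top.ne,
      ← lintegral_const_mul' _ _ ENNReal.ofReal_ne_top]
    apply lintegral_mono_ae
    filter_upwards [ae_norm_eq_one_sphereMeasure μ] with θ hθ
    rw [← lintegral_const_mul' _ _ measure_ball_lt_top.ne,
      ← lintegral_const_mul' _ _ ENNReal.ofReal_ne_top]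
    apply lintegral_mono_ae
    filter_upwards [ae_norm_eq_one_sphereMeasure μ] with ω hω
    rw [← lintegral_add_left (by fun_prop)]
    exact measure_ball_mul_gagliardoKernel_le μ hp hθ hω
  rw [ENNReal.coe_toNNReal hK, mul_assoc, mul_assoc, mul_assoc]
  exact (ENNReal.mul_le_iff_le_inv hV measure_ball_lt_top.ne).1 hV_mul

end TraceEstimate

section ExteriorInterior

lemma mul_add_mul_le_add_mul_add (a b x y : ℝ≥0∞) : a * x + b * y ≤ (a + b) * (x + y) := by
  calc a * x + b * y ≤ a * (x + y) + b * (x + y) := by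
        gcongr
        exacts [le_self_add, le_add_self]
    _ = (a + b) * (x + y) := (add_mul a b (x + y)).symm

lemma lintegral_lintegral_const_mul_add {X Y : Type*} [MeasurableSpace X] [MeasurableSpace Y]
    {μ : Measure X} {ν : Measure Y} [SFinite ν] {a b : ℝ≥0∞} (ha : a ≠ ∞) (hb : b ≠ ∞)
    {f g : X → Y → ℝ≥0∞} (hf : Measurable (Function.uncurry f)) :
    ∫⁻ x, ∫⁻ y, (a * f x y + b * g x y) ∂ν ∂μ =
      a * ∫⁻ x, ∫⁻ y, f x y ∂ν ∂μ + b * ∫⁻ x, ∫⁻ y, g x y ∂ν ∂μ := by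
  simp_rw [lintegral_add_left (hf.of_uncurry_left.const_mul _), lintegral_const_mul' _ _ ha,
    lintegral_const_mul' _ _ hb]
  rw [lintegral_add_left (hf.lintegral_prod_right.const_mul _), lintegral_const_mul' _ _ ha,
    lintegral_const_mul' _ _ hb]

lemma rpow_inv_le_mul_add_rpow_neg {b t q : ℝ} (hb : 0 < b) (hbt : b ≤ t) (hq : 0 ≤ q) :
    (t ^ q)⁻¹ ≤ 2 ^ q * (b + t) ^ (-q) := by
  have ht : 0 < t := hb.trans_le hbt
  rw [Real.rpow_neg (by positivity), ← div_eq_mul_inv, inv_eq_one_div,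
    div_le_div_iff₀ (by positivity) (by positivity), one_mul, ← Real.mul_rpow zero_le_two ht.le]
  gcongr
  linarith

lemma pow_inv_mul_rpow_sub_le {n : ℕ} (hn : n ≠ 0) {b d q : ℝ} (hb : 0 < b) (hb1 : b ≤ 1)
    (hd : 0 < d) (hdb : d ≤ 3 * b) (hq : 0 ≤ q) :
    (b ^ (n - 1))⁻¹ * b ^ (n - q) ≤ 3 ^ q * (d ^ q)⁻¹ := by
  calc (b ^ (n - 1))⁻¹ * b ^ (n - q) = b * (b ^ q)⁻¹ := by
        rw [Real.rpow_sub hb, Real.rpow_natCast, ← mul_div_assoc, ← div_eq_mul_inv,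
          ← pow_sub_one_mul hn b, inv_mul_cancel_left₀ (by positivity)]
    _ ≤ 1 * (b ^ q)⁻¹ := by gcongr
    _ ≤ 3 ^ q * (d ^ q)⁻¹ := by
        rw [one_mul, ← div_eq_mul_inv, inv_eq_one_div,
          div_le_div_iff₀ (by positivity) (by positivity), one_mul,
          ← Real.mul_rpow zero_le_three hb.le]
        gcongr

lemma gagliardoKernel_sub_le_mul_rpow_neg {E F : Type*} [NormedAddCommGroup E]
    [NormedAddCommGroup F] (p : ℝ) {q : ℝ} (hq : 0 ≤ q) (a : F) {x y : E} (hy : ‖y‖ < 1)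
    (hx : 1 ≤ ‖x‖) :
    gagliardoKernel p q a (x - y) ≤ ENNReal.ofReal (‖a‖ ^ p) * (ENNReal.ofReal (2 ^ q) *
      ENNReal.ofReal ((1 - ‖y‖ + ‖x - y‖) ^ (-q))) := by
  rw [← ENNReal.ofReal_mul (by positivity), gagliardoKernel_eq_mul]
  gcongr
  exact rpow_inv_le_mul_add_rpow_neg (by linarith) (by linarith [norm_sub_norm_le x y]) hq

lemma gagliardoKernel_sub_le_of_norm_sub_le {E F : Type*} [NormedAddCommGroup E]
    [NormedAddCommGroup F] [NormedSpace ℝ F] {p q δ S : ℝ} (hp : 0 < p) (hq : 0 ≤ q) (hδ : 0 < δ)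
    (u v : E → F) {x y z θ : E} (hxy : δ ≤ ‖x - y‖) (hxθ : ‖x - θ‖ ≤ 3 * ‖x - y‖)
    (hS : ‖u θ - v θ‖ ≤ S) :
    gagliardoKernel p q (u x - v z) (x - y) ≤
      ENNReal.ofReal (4 ^ p) * ENNReal.ofReal (S ^ p) * truncatedKernel p q δ (x - y) +
        (ENNReal.ofReal (4 ^ p) * ENNReal.ofReal (3 ^ q) *
            gagliardoKernel p q (u θ - u x) (θ - x) +
          ENNReal.ofReal (4 ^ p) * gagliardoKernel p q (v θ - v z) (x - y)) := by
  have hu : gagliardoKernel p q (u x - u θ) (x - y) ≤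
      ENNReal.ofReal (3 ^ q) * gagliardoKernel p q (u θ - u x) (θ - x) := by
    rw [gagliardoKernel_sub_comm (u θ)]
    refine gagliardoKernel_le_mul_of_norm_le hp.ne' hq three_pos (fun h ↦ ?_) hxθ
    rw [sub_eq_zero.1 h, sub_self]
  have hjump : gagliardoKernel p q (u θ - v θ) (x - y) ≤
      ENNReal.ofReal (S ^ p) * truncatedKernel p q δ (x - y) := by
    have hmin : |(1 : ℝ)| ≤ 1 * min 1 (‖x - y‖ / δ) := by
      rw [abs_one, one_mul, min_eq_left ((one_le_div hδ).2 hxy)]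
    simpa using gagliardoKernel_smul_le (q := q) hp.le hδ.le hS zero_le_one hmin
  calc gagliardoKernel p q (u x - v z) (x - y)
      = gagliardoKernel p q ((u x - u θ) + (u θ - v θ) + (v θ - v z)) (x - y) := by
        congr 1
        abel
    _ ≤ _ := gagliardoKernel_add_add_le hp.le _ _ _ _
    _ ≤ _ := by
        grw [hu, hjump]
        exact le_of_eq (by ring)

variable {E : Type*} [NormedAddCommGroup E] [NormedSpace ℝ E] {p α : ℝ}

/-- The weight by which a point `y` of the open unit ball is averaged over the cap of the unit
sphere consisting of the points `θ` whose distance to `y` is at most twice the distance of `y`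
to the sphere. -/
def capKernel (y θ : E) : ℝ≥0∞ :=
  (closedBall y (2 * (1 - ‖y‖))).indicator
    (fun _ ↦ ENNReal.ofReal (((1 - ‖y‖) ^ (finrank ℝ E - 1))⁻¹)) θ

lemma capKernel_le {y θ : E} (hy : ‖y‖ < 1) (hθ : ‖θ‖ = 1) :
    capKernel y θ ≤ ENNReal.ofReal (2 ^ (finrank ℝ E - 1)) *
      ENNReal.ofReal ((‖θ - y‖ ^ (finrank ℝ E - 1))⁻¹) := by
  unfold capKernel
  by_cases hcap : θ ∈ closedBall y (2 * (1 - ‖y‖))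
  · have hθy : 0 < ‖θ - y‖ := by linarith [norm_sub_norm_le θ y]
    have : 0 < 1 - ‖y‖ := by linarith
    rw [indicator_of_mem hcap, ← ENNReal.ofReal_mul (by positivity)]
    apply ENNReal.ofReal_le_ofReal
    rw [inv_le_iff_one_le_mul₀ (by positivity), mul_right_comm, ← mul_pow, ← div_eq_mul_inv,
      one_le_div (by positivity)]
    gcongr
    exact mem_closedBall_iff_norm.1 hcap
  · simp [indicator_of_notMem hcap]

lemma norm_sub_inv_smul_lt {δ : ℝ} (hδ : 0 < δ) (hδ1 : δ < 1) {y : E} (hy : ‖y‖ < 1 - δ) :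
    ‖(1 - δ)⁻¹ • y‖ < 1 ∧ ‖y - (1 - δ)⁻¹ • y‖ ≤ 1 - ‖y‖ := by
  have h1δ : 0 < 1 - δ := by linarith
  constructor
  · rwa [norm_smul, Real.norm_of_nonneg (by positivity), inv_mul_lt_one₀ h1δ]
  · have hcoeff : y - (1 - δ)⁻¹ • y = (-(δ / (1 - δ))) • y := by
      match_scalars
      field_simp
      ring
    rw [hcoeff, norm_smul, norm_neg, Real.norm_of_nonneg (by positivity)]
    calc δ / (1 - δ) * ‖y‖ ≤ δ / (1 - δ) * (1 - δ) := by gcongr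
      _ = δ := div_mul_cancel₀ _ h1δ.ne'
      _ ≤ 1 - ‖y‖ := by linarith

variable [MeasurableSpace E] [BorelSpace E] [FiniteDimensional ℝ E]

@[fun_prop]
lemma measurable_capKernel {X : Type*} [MeasurableSpace X] {y θ : X → E} (hy : Measurable y)
    (hθ : Measurable θ) : Measurable fun x ↦ capKernel (y x) (θ x) := by
  have hcap : MeasurableSet {x | θ x ∈ closedBall (y x) (2 * (1 - ‖y x‖))} := by
    simp only [mem_closedBall]
    exact measurableSet_le (by fun_prop) (by fun_prop)
  exact Measurable.ite hcap (by fun_prop) measurable_const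

section Measurable

variable (μ : Measure E) [μ.IsAddHaarMeasure] {F : Type*} [NormedAddCommGroup F]
  [MeasurableSpace F] [BorelSpace F] [SecondCountableTopology F]

lemma lintegral_capKernel_mul_exterior_le {C : ℝ≥0}
    (hC : ∀ θ : E, ‖θ‖ = 1 → ∫⁻ y in ball 0 1, capKernel y θ ∂μ ≤ C) {u : E → F}
    (hu : Measurable u) (X : Set E) {r : ℝ} (hr : r ≤ 1) (q : ℝ) :
    ∫⁻ x in X, ∫⁻ y in ball 0 r, ∫⁻ θ,
        capKernel y θ * gagliardoKernel p q (u θ - u x) (θ - x) ∂sphereMeasure μ ∂μ ∂μ ≤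
      C * mixedEnergy p q (sphereMeasure μ) (μ.restrict X) u := by
  rw [mixedEnergy_comm hu]
  unfold mixedEnergy
  rw [← lintegral_const_mul' _ _ ENNReal.coe_ne_top]
  apply lintegral_mono
  intro x
  dsimp only
  rw [lintegral_lintegral_swap (by fun_prop), ← lintegral_const_mul' _ _ ENNReal.coe_ne_top]
  apply lintegral_mono_ae
  filter_upwards [ae_norm_eq_one_sphereMeasure μ] with θ hθ
  rw [lintegral_mul_const _ (by fun_prop), gagliardoKernel_sub_comm]
  grw [ball_subset_ball hr, hC θ hθ]

end Measurable

variable [Nontrivial E] (μ : Measure E) [μ.IsAddHaarMeasure]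

lemma exists_le_add_mul_lintegral_capKernel : ∃ C : ℝ≥0, ∀ y : E, ‖y‖ < 1 →
    ∀ (k a : ℝ≥0∞) {G : E → ℝ≥0∞},
      (∀ θ, ‖θ‖ = 1 → ‖θ - y‖ ≤ 2 * (1 - ‖y‖) → k ≤ a + G θ) →
      k ≤ a + C * ∫⁻ θ, capKernel y θ * G θ ∂sphereMeasure μ := by
  obtain ⟨C, hC⟩ := exists_rpow_le_sphereMeasure_closedBall μ
  refine ⟨C, fun y hy k a G hk ↦ tsub_le_iff_left.1 ?_⟩
  set w := ENNReal.ofReal (((1 - ‖y‖) ^ (finrank ℝ E - 1))⁻¹)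
  set Γ := closedBall y (2 * (1 - ‖y‖))
  have : 0 < 1 - ‖y‖ := by linarith
  have hw : w * ENNReal.ofReal ((1 - ‖y‖) ^ (finrank ℝ E - 1)) = 1 := by
    rw [← ENNReal.ofReal_mul (by positivity), inv_mul_cancel₀ (by positivity), ENNReal.ofReal_one]
  calc k - a = w * ENNReal.ofReal ((1 - ‖y‖) ^ (finrank ℝ E - 1)) * (k - a) := by
        rw [hw, one_mul]
    _ ≤ C * ∫⁻ _ in Γ, w * (k - a) ∂sphereMeasure μ := by
        grw [hC y hy, setLIntegral_const]
        exact le_of_eq (by ring)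
    _ ≤ C * ∫⁻ θ, capKernel y θ * G θ ∂sphereMeasure μ := by
        gcongr C * ?_
        rw [← lintegral_indicator measurableSet_closedBall]
        apply lintegral_mono_ae
        filter_upwards [ae_norm_eq_one_sphereMeasure μ] with θ hθ
        by_cases hcap : θ ∈ Γ
        · rw [capKernel, indicator_of_mem hcap, indicator_of_mem hcap]
          gcongr
          exact tsub_le_iff_left.2 (hk θ hθ (mem_closedBall_iff_norm.1 hcap))
        · rw [indicator_of_notMem hcap]
          exact zero_le

lemma exists_setLIntegral_capKernel_le : ∃ C : ℝ≥0, ∀ θ : E, ‖θ‖ = 1 →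
    ∫⁻ y in ball 0 1, capKernel y θ ∂μ ≤ C := by
  obtain ⟨C, hC⟩ := exists_setLIntegral_ball_norm_sub_pow_inv_le μ
  refine ⟨Real.toNNReal (2 ^ (finrank ℝ E - 1)) * C, fun θ hθ ↦ ?_⟩
  grw [setLIntegral_mono' measurableSet_ball fun y hy ↦ capKernel_le (mem_ball_zero_iff.1 hy) hθ,
    lintegral_const_mul' _ _ ENNReal.ofReal_ne_top, hC θ hθ.le, ENNReal.coe_mul, ENNReal.ofReal]

lemma exists_setLIntegral_capKernel_mul_gagliardoKernel_le (p : ℝ) (hα : 0 < α) : ∃ C : ℝ≥0,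
    ∀ {F : Type v} [NormedAddCommGroup F] (a : F) {θ y z : E}, ‖θ‖ = 1 → ‖y‖ < 1 → ‖z‖ < 1 →
      ‖y - z‖ ≤ 1 - ‖y‖ →
      ∫⁻ x in (ball 0 1)ᶜ, capKernel y θ * gagliardoKernel p (finrank ℝ E + α) a (x - y) ∂μ ≤
        C * gagliardoKernel p (finrank ℝ E + α) a (θ - z) := by
  set q := finrank ℝ E + α
  have hq : 0 < q := by positivity
  obtain ⟨C, hC⟩ := exists_lintegral_add_norm_sub_rpow_neg_le μ (q := q) (by simpa [q])
  refine ⟨Real.toNNReal (6 ^ q) * C, fun {F} _ a θ y z hθ hy hz hyz ↦ ?_⟩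
  set b := 1 - ‖y‖
  have hb : 0 < b := by linarith
  by_cases hcap : θ ∈ closedBall y (2 * b)
  swap
  · simp [capKernel, b, indicator_of_notMem hcap]
  have hθz : 0 < ‖θ - z‖ := by linarith [norm_sub_norm_le θ z]
  have hθz_le : ‖θ - z‖ ≤ 3 * b := by
    linarith [norm_sub_le_norm_sub_add_norm_sub θ y z, mem_closedBall_iff_norm.1 hcap]
  have hweight :=
    pow_inv_mul_rpow_sub_le (finrank_pos (R := ℝ) (M := E)).ne' hb (by linarith [norm_nonneg y])
      hθz hθz_le hq.le
  calc ∫⁻ x in (ball 0 1)ᶜ, capKernel y θ * gagliardoKernel p q a (x - y) ∂μ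
      ≤ ENNReal.ofReal ((b ^ (finrank ℝ E - 1))⁻¹) * (ENNReal.ofReal (‖a‖ ^ p) *
          (ENNReal.ofReal (2 ^ q) * (C * ENNReal.ofReal (b ^ (finrank ℝ E - q))))) := by
        rw [capKernel, indicator_of_mem hcap, lintegral_const_mul' _ _ ENNReal.ofReal_ne_top]
        grw [setLIntegral_mono' measurableSet_ball.compl fun x hx ↦
            gagliardoKernel_sub_le_mul_rpow_neg p hq.le a hy (by simpa using hx),
          lintegral_const_mul' _ _ ENNReal.ofReal_ne_top,
          lintegral_const_mul' _ _ ENNReal.ofReal_ne_top, setLIntegral_le_lintegral, hC b hb y]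
    _ = ENNReal.ofReal (2 ^ q) * C * ENNReal.ofReal (‖a‖ ^ p) *
          ENNReal.ofReal ((b ^ (finrank ℝ E - 1))⁻¹ * b ^ (finrank ℝ E - q)) := by
        rw [ENNReal.ofReal_mul (by positivity)]
        ring
    _ ≤ ENNReal.ofReal (2 ^ q) * C * ENNReal.ofReal (‖a‖ ^ p) *
          ENNReal.ofReal (3 ^ q * (‖θ - z‖ ^ q)⁻¹) := by
        grw [hweight]
    _ = (Real.toNNReal (6 ^ q) * C : ℝ≥0) * gagliardoKernel p q a (θ - z) := by
        rw [gagliardoKernel_eq_mul, ENNReal.ofReal_mul (by positivity),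
          show (6 : ℝ) = 2 * 3 by norm_num, Real.mul_rpow zero_le_two zero_le_three,
          ENNReal.coe_mul, ← ENNReal.ofReal, ENNReal.ofReal_mul (by positivity)]
        ring

theorem exists_lintegral_lintegral_le_add_truncatedKernel (hα : 0 < α) (hαp : α < p) :
    ∃ C : ℝ≥0, ∀ {X Y : Set E}, MeasurableSet X → MeasurableSet Y → X ⊆ ball 0 2 →
      ∀ {k f : E → E → ℝ≥0∞} {T : ℝ≥0∞} {δ : ℝ}, 0 < δ →
        (∀ x ∈ X, ∀ y ∈ Y, k x y ≤ f x y + T * truncatedKernel p (finrank ℝ E + α) δ (x - y)) →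
        ∫⁻ x in X, ∫⁻ y in Y, k x y ∂μ ∂μ ≤
          ∫⁻ x in X, ∫⁻ y in Y, f x y ∂μ ∂μ + C * (T * ENNReal.ofReal (δ ^ (-α))) := by
  obtain ⟨C, hC⟩ := exists_lintegral_truncatedKernel_le μ hα hαp
  refine ⟨C * (μ (ball 0 2)).toNNReal, fun {X Y} hX hY hX2 {k f T δ} hδ hk ↦ ?_⟩
  have hinner : ∀ x ∈ X, ∫⁻ y in Y, k x y ∂μ ≤
      ∫⁻ y in Y, f x y ∂μ + T * (C * ENNReal.ofReal (δ ^ (-α))) := by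
    intro x hx
    grw [setLIntegral_mono' hY (hk x hx), lintegral_add_right _ (by fun_prop),
      lintegral_const_mul _ (by fun_prop), setLIntegral_le_lintegral _
        (fun y ↦ truncatedKernel p (finrank ℝ E + α) δ (x - y)), hC δ hδ x]
  have hμX : μ X ≤ μ (ball 0 2) := measure_mono hX2
  grw [setLIntegral_mono' hX hinner, lintegral_add_right _ measurable_const, setLIntegral_const,
    hμX, ENNReal.coe_mul, ENNReal.coe_toNNReal measure_ball_lt_top.ne]
  exact le_of_eq (by ring)

lemma exists_lintegral_capKernel_mul_interior_le (p : ℝ) (hα : 0 < α) : ∃ C : ℝ≥0,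
    ∀ {F : Type v} [NormedAddCommGroup F] [MeasurableSpace F] [BorelSpace F]
      [SecondCountableTopology F] {v : E → F}, Measurable v → ∀ {δ : ℝ}, 0 < δ → δ < 1 →
      ∀ {X : Set E}, X ⊆ (ball 0 1)ᶜ →
      ∫⁻ x in X, ∫⁻ y in ball 0 (1 - δ), ∫⁻ θ,
          capKernel y θ * gagliardoKernel p (finrank ℝ E + α) (v θ - v ((1 - δ)⁻¹ • y)) (x - y)
          ∂sphereMeasure μ ∂μ ∂μ ≤
        C * mixedEnergy p (finrank ℝ E + α) (sphereMeasure μ) (μ.restrict (ball 0 1)) v := by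
  obtain ⟨C, hC⟩ := exists_setLIntegral_capKernel_mul_gagliardoKernel_le.{v} μ p hα
  refine ⟨C, fun {F} _ _ _ _ v hv δ hδ hδ1 X hX ↦ ?_⟩
  set q := finrank ℝ E + α
  rw [lintegral_lintegral_swap (by fun_prop)]
  calc ∫⁻ y in ball 0 (1 - δ), ∫⁻ x in X, ∫⁻ θ,
        capKernel y θ * gagliardoKernel p q (v θ - v ((1 - δ)⁻¹ • y)) (x - y) ∂sphereMeasure μ ∂μ ∂μ
      ≤ ∫⁻ y in ball 0 (1 - δ), ∫⁻ θ,
          C * gagliardoKernel p q (v θ - v ((1 - δ)⁻¹ • y)) (θ - (1 - δ)⁻¹ • y)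
          ∂sphereMeasure μ ∂μ := by
        apply setLIntegral_mono' measurableSet_ball
        intro y hy
        obtain ⟨hz, hyz⟩ := norm_sub_inv_smul_lt hδ hδ1 (mem_ball_zero_iff.1 hy)
        rw [lintegral_lintegral_swap (by fun_prop)]
        apply lintegral_mono_ae
        filter_upwards [ae_norm_eq_one_sphereMeasure μ] with θ hθ
        grw [hX, hC _ hθ (by linarith [mem_ball_zero_iff.1 hy]) hz hyz]
    _ = C * ∫⁻ y in ball 0 (1 - δ), ∫⁻ θ,
          gagliardoKernel p q (v θ - v ((1 - δ)⁻¹ • y)) (θ - (1 - δ)⁻¹ • y)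
          ∂sphereMeasure μ ∂μ := by
        simp_rw [lintegral_const_mul' _ _ ENNReal.coe_ne_top]
    _ ≤ C * ∫⁻ z in ball 0 1, ∫⁻ θ,
          gagliardoKernel p q (v θ - v z) (θ - z) ∂sphereMeasure μ ∂μ := by
        gcongr C * ?_
        exact setLIntegral_ball_comp_inv_smul_le μ hδ.le hδ1
          fun z ↦ ∫⁻ θ, gagliardoKernel p q (v θ - v z) (θ - z) ∂sphereMeasure μ
    _ = C * mixedEnergy p q (sphereMeasure μ) (μ.restrict (ball 0 1)) v := by
        rw [lintegral_lintegral_swap (by fun_prop), mixedEnergy]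

lemma exists_lintegral_capKernel_mul_add_le (p : ℝ) (hα : 0 < α) (a b : ℝ≥0) : ∃ C : ℝ≥0,
    ∀ {F : Type v} [NormedAddCommGroup F] [MeasurableSpace F] [BorelSpace F]
      [SecondCountableTopology F] {u v : E → F}, Measurable u → Measurable v →
      ∀ {δ : ℝ}, 0 < δ → δ < 1 → ∀ {X : Set E}, X ⊆ (ball 0 1)ᶜ →
      ∫⁻ x in X, ∫⁻ y in ball 0 (1 - δ), ∫⁻ θ, capKernel y θ *
          (a * gagliardoKernel p (finrank ℝ E + α) (u θ - u x) (θ - x) +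
            b * gagliardoKernel p (finrank ℝ E + α) (v θ - v ((1 - δ)⁻¹ • y)) (x - y))
          ∂sphereMeasure μ ∂μ ∂μ ≤
        C * (mixedEnergy p (finrank ℝ E + α) (sphereMeasure μ) (μ.restrict X) u +
          mixedEnergy p (finrank ℝ E + α) (sphereMeasure μ) (μ.restrict (ball 0 1)) v) := by
  obtain ⟨Ccap, hcap⟩ := exists_setLIntegral_capKernel_le μ
  obtain ⟨Cint, hint⟩ := exists_lintegral_capKernel_mul_interior_le.{v} μ p hα
  refine ⟨a * Ccap + b * Cint, fun {F} _ _ _ _ u v hu hv δ hδ hδ1 X hX ↦ ?_⟩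
  set q := finrank ℝ E + α
  have hext := lintegral_capKernel_mul_exterior_le (p := p) μ hcap hu X (r := 1 - δ) (by linarith) q
  have hsplit : ∀ x y, ∫⁻ θ, capKernel y θ * (a * gagliardoKernel p q (u θ - u x) (θ - x) +
          b * gagliardoKernel p q (v θ - v ((1 - δ)⁻¹ • y)) (x - y)) ∂sphereMeasure μ =
      a * ∫⁻ θ, capKernel y θ * gagliardoKernel p q (u θ - u x) (θ - x) ∂sphereMeasure μ +
        b * ∫⁻ θ, capKernel y θ * gagliardoKernel p q (v θ - v ((1 - δ)⁻¹ • y)) (x - y)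
          ∂sphereMeasure μ := by
    intro x y
    rw [← lintegral_const_mul' _ _ ENNReal.coe_ne_top, ← lintegral_const_mul' _ _
      ENNReal.coe_ne_top, ← lintegral_add_left (by fun_prop)]
    congr! 2
    ring
  simp_rw [hsplit]
  rw [lintegral_lintegral_const_mul_add ENNReal.coe_ne_top ENNReal.coe_ne_top (by fun_prop)]
  grw [hext, hint hv hδ hδ1 hX, ENNReal.coe_add, ← mul_add_mul_le_add_mul_add, ENNReal.coe_mul,
    ENNReal.coe_mul, mul_assoc, mul_assoc]

theorem exists_lintegral_exterior_interior_le (hα : 0 < α) (hαp : α < p) : ∃ C : ℝ≥0,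
    ∀ {F : Type v} [NormedAddCommGroup F] [NormedSpace ℝ F] [MeasurableSpace F] [BorelSpace F]
      [SecondCountableTopology F] {u v : E → F}, Measurable u → Measurable v →
      ∀ {δ S : ℝ}, 0 < δ → δ < 1 → (∀ θ, ‖θ‖ = 1 → ‖u θ - v θ‖ ≤ S) →
      ∫⁻ x in ball 0 2 \ ball 0 1, ∫⁻ y in ball 0 (1 - δ),
          gagliardoKernel p (finrank ℝ E + α) (u x - v ((1 - δ)⁻¹ • y)) (x - y) ∂μ ∂μ ≤
        C * (mixedEnergy p (finrank ℝ E + α) (sphereMeasure μ)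
            (μ.restrict (ball 0 2 \ ball 0 1)) u +
          mixedEnergy p (finrank ℝ E + α) (sphereMeasure μ) (μ.restrict (ball 0 1)) v +
          ENNReal.ofReal (S ^ p) * ENNReal.ofReal (δ ^ (-α))) := by
  set q := finrank ℝ E + α
  have hp : 0 < p := hα.trans hαp
  have hq : 0 ≤ q := by positivity
  obtain ⟨Cavg, havg⟩ := exists_le_add_mul_lintegral_capKernel μ
  obtain ⟨Ccap, hcap⟩ := exists_lintegral_capKernel_mul_add_le.{v} μ p hα
    (Real.toNNReal (4 ^ p) * Real.toNNReal (3 ^ q)) (Real.toNNReal (4 ^ p))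
  obtain ⟨Ctr, htr⟩ := exists_lintegral_lintegral_le_add_truncatedKernel μ hα hαp
  refine ⟨Cavg * Ccap + Ctr * Real.toNNReal (4 ^ p),
    fun {F} _ _ _ _ _ u v hu hv δ S hδ hδ1 hS ↦ ?_⟩
  set X := ball (0 : E) 2 \ ball 0 1
  have hpt : ∀ x ∈ X, ∀ y ∈ ball 0 (1 - δ),
      gagliardoKernel p q (u x - v ((1 - δ)⁻¹ • y)) (x - y) ≤
        Cavg * ∫⁻ θ, capKernel y θ *
          ((Real.toNNReal (4 ^ p) * Real.toNNReal (3 ^ q) : ℝ≥0) *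
              gagliardoKernel p q (u θ - u x) (θ - x) +
            Real.toNNReal (4 ^ p) * gagliardoKernel p q (v θ - v ((1 - δ)⁻¹ • y)) (x - y))
          ∂sphereMeasure μ +
        Real.toNNReal (4 ^ p) * ENNReal.ofReal (S ^ p) * truncatedKernel p q δ (x - y) := by
    intro x hx y hy
    have hx1 : 1 ≤ ‖x‖ := by simpa using hx.2
    have hy1 : ‖y‖ < 1 - δ := mem_ball_zero_iff.1 hy
    rw [add_comm]
    refine havg y (by linarith) _ _ fun θ hθ hθy ↦ ?_
    have hxy := norm_sub_norm_le x y
    rw [norm_sub_rev] at hθy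
    rw [ENNReal.coe_mul]
    exact gagliardoKernel_sub_le_of_norm_sub_le hp hq hδ u v (by linarith)
      (by linarith [norm_sub_le_norm_sub_add_norm_sub x y θ]) (hS θ hθ)
  refine (htr (measurableSet_ball.diff measurableSet_ball) measurableSet_ball sdiff_subset hδ
    hpt).trans ?_
  simp_rw [lintegral_const_mul' _ _ ENNReal.coe_ne_top]
  grw [hcap hu hv hδ hδ1 fun x hx ↦ hx.2, ENNReal.coe_add, ← mul_add_mul_le_add_mul_add,
    ENNReal.coe_mul, ENNReal.coe_mul]
  exact le_of_eq (by ring)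

end ExteriorInterior

section UnitGluing

/-- `IsUnitGluing δ L S χ u v w` says that `w` glues `u` outside the unit ball to the rescaling of
`v` from the unit ball to the ball of radius `1 - δ`, by means of the radial extensions of the
traces of `u` and `v` on the unit sphere and of a cutoff `χ` in the annulus between the two; the
constants `L` and `S` control the slope of `χ` and the distance between the two traces. -/
structure IsUnitGluing {E F : Type*} [NormedAddCommGroup E] [NormedSpace ℝ E]
    [NormedAddCommGroup F] [NormedSpace ℝ F] (δ : ℝ) (L : ℝ≥0) (S : ℝ) (χ : E → ℝ)
    (u v w : E → F) : Prop where
  width_pos : 0 < δ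
  width_le : δ ≤ 1 / 2
  eq_exterior : ∀ x, 1 ≤ ‖x‖ → w x = u x
  eq_annulus : ∀ x, 1 - δ ≤ ‖x‖ → ‖x‖ < 1 →
    w x = (1 - χ x) • u (NormedSpace.normalize x) + χ x • v (NormedSpace.normalize x)
  eq_interior : ∀ x, ‖x‖ < 1 - δ → w x = v ((1 - δ)⁻¹ • x)
  cutoff_mem_Icc : ∀ x, χ x ∈ Icc 0 1
  cutoff_exterior : ∀ x, 1 ≤ ‖x‖ → χ x = 0
  cutoff_interior : ∀ x, ‖x‖ < 1 - δ → χ x = 1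
  abs_cutoff_sub_le : ∀ x y, |χ x - χ y| ≤ L * min 1 (‖x - y‖ / δ)
  norm_sub_le : ∀ θ, ‖θ‖ = 1 → ‖u θ - v θ‖ ≤ S

variable {E F : Type*} [NormedAddCommGroup E] [NormedSpace ℝ E] [NormedAddCommGroup F]
  [NormedSpace ℝ F] {p q δ S : ℝ} {L : ℝ≥0} {χ : E → ℝ} {u v w : E → F}

lemma norm_normalize_sub_self {x : E} (hx : x ≠ 0) :
    ‖NormedSpace.normalize x - x‖ = |1 - ‖x‖| := by
  nth_rw 2 [← NormedSpace.norm_smul_normalize x]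
  rw [norm_sub_rev, norm_smul_sub_self (NormedSpace.norm_normalize hx), abs_sub_comm]

lemma norm_normalize_sub_inv_smul_le (hδ : δ ≤ 1 / 2) {x y : E} (hx : 1 - δ ≤ ‖x‖) (hx0 : x ≠ 0)
    (hy : ‖y‖ ≤ 1 - δ) :
    ‖NormedSpace.normalize x - (1 - δ)⁻¹ • y‖ ≤ 4 * ‖x - y‖ := by
  have h1δ : 0 < 1 - δ := by linarith
  have hc : 0 < (1 - δ)⁻¹ := inv_pos.2 h1δ
  have hc2 : (1 - δ)⁻¹ ≤ 2 := inv_le_of_inv_le₀ two_pos (by linarith)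
  have hnorm (z : E) : ‖(1 - δ)⁻¹ • z‖ = (1 - δ)⁻¹ * ‖z‖ := by
    rw [norm_smul, Real.norm_of_nonneg hc.le]
  have hxx : ‖NormedSpace.normalize x - (1 - δ)⁻¹ • x‖ ≤ (1 - δ)⁻¹ * ‖x - y‖ := by
    calc ‖NormedSpace.normalize x - (1 - δ)⁻¹ • x‖ = (1 - δ)⁻¹ * ‖x‖ - 1 := by
          rw [← NormedSpace.normalize_smul_of_pos hc,
            norm_normalize_sub_self (smul_ne_zero hc.ne' hx0), abs_sub_comm, hnorm,
            abs_of_nonneg (sub_nonneg.2 ((one_le_inv_mul₀ h1δ).2 hx))]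
      _ = (1 - δ)⁻¹ * (‖x‖ - (1 - δ)) := by field_simp
      _ ≤ (1 - δ)⁻¹ * ‖x - y‖ := by
          gcongr
          linarith [norm_sub_norm_le x y]
  calc ‖NormedSpace.normalize x - (1 - δ)⁻¹ • y‖
      ≤ ‖NormedSpace.normalize x - (1 - δ)⁻¹ • x‖ + ‖(1 - δ)⁻¹ • x - (1 - δ)⁻¹ • y‖ :=
        norm_sub_le_norm_sub_add_norm_sub ..
    _ ≤ 2 * ‖x - y‖ + 2 * ‖x - y‖ := by
        grw [hxx, ← smul_sub, hnorm, hc2]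
    _ = 4 * ‖x - y‖ := by ring

namespace IsUnitGluing

lemma gagliardoKernel_cutoff_smul_le (h : IsUnitGluing δ L S χ u v w) (hp : 0 ≤ p) {θ : E}
    (hθ : ‖θ‖ = 1) (x y : E) :
    gagliardoKernel p q ((χ y - χ x) • (u θ - v θ)) (x - y) ≤
      ENNReal.ofReal (L ^ p) * ENNReal.ofReal (S ^ p) * truncatedKernel p q δ (x - y) := by
  have hS : 0 ≤ S := (norm_nonneg _).trans (h.norm_sub_le θ hθ)
  rw [← ENNReal.ofReal_mul (by positivity), ← Real.mul_rpow L.coe_nonneg hS]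
  apply gagliardoKernel_smul_le hp h.width_pos.le (h.norm_sub_le θ hθ) L.coe_nonneg
  rw [abs_sub_comm]
  exact h.abs_cutoff_sub_le x y

lemma gagliardoKernel_exterior_annulus_le (h : IsUnitGluing δ L S χ u v w) (hp : 0 < p)
    (hq : 0 ≤ q) {x y : E} (hx : 1 ≤ ‖x‖) (hy : 1 - δ ≤ ‖y‖) (hy1 : ‖y‖ < 1) :
    gagliardoKernel p q (w x - w y) (x - y) ≤
      ENNReal.ofReal (2 ^ p) * ENNReal.ofReal (2 ^ q) * gagliardoKernel p q
          (u (NormedSpace.normalize y) - u x) (NormedSpace.normalize y - x) +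
        ENNReal.ofReal (2 ^ p) * (ENNReal.ofReal (L ^ p) * ENNReal.ofReal (S ^ p)) *
          truncatedKernel p q δ (x - y) := by
  have hy0 : y ≠ 0 := norm_pos_iff.1 (by linarith [h.width_le])
  set θ := NormedSpace.normalize y
  have hθ : ‖θ‖ = 1 := NormedSpace.norm_normalize hy0
  have hdecomp : w x - w y = (u x - u θ) + (χ y - χ x) • (u θ - v θ) := by
    rw [h.eq_exterior x hx, h.eq_annulus y hy hy1, h.cutoff_exterior x hx]
    module
  have hxθ : ‖x - θ‖ ≤ 2 * ‖x - y‖ := by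
    have hyθ : ‖y - θ‖ = 1 - ‖y‖ := by
      rw [norm_sub_rev, norm_normalize_sub_self hy0, abs_of_pos (by linarith)]
    linarith [norm_sub_le_norm_sub_add_norm_sub x y θ, norm_sub_norm_le x y]
  have hu : gagliardoKernel p q (u x - u θ) (x - y) ≤
      ENNReal.ofReal (2 ^ q) * gagliardoKernel p q (u θ - u x) (θ - x) := by
    rw [gagliardoKernel_sub_comm (u θ)]
    exact gagliardoKernel_le_mul_of_norm_le hp.ne' hq two_pos
      (fun h0 ↦ by rw [sub_eq_zero.1 h0, sub_self]) hxθ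
  rw [hdecomp]
  grw [gagliardoKernel_add_le hp.le, hu, h.gagliardoKernel_cutoff_smul_le hp.le hθ]
  exact le_of_eq (by ring)

lemma gagliardoKernel_annulus_interior_le (h : IsUnitGluing δ L S χ u v w) (hp : 0 < p)
    (hq : 0 ≤ q) {x y : E} (hx : 1 - δ ≤ ‖x‖) (hx1 : ‖x‖ < 1) (hy : ‖y‖ < 1 - δ) :
    gagliardoKernel p q (w x - w y) (x - y) ≤
      ENNReal.ofReal (2 ^ p) * ENNReal.ofReal (4 ^ q) * gagliardoKernel p q
          (v (NormedSpace.normalize x) - v ((1 - δ)⁻¹ • y))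
          (NormedSpace.normalize x - (1 - δ)⁻¹ • y) +
        ENNReal.ofReal (2 ^ p) * (ENNReal.ofReal (L ^ p) * ENNReal.ofReal (S ^ p)) *
          truncatedKernel p q δ (x - y) := by
  have hδ2 := h.width_le
  have hx0 : x ≠ 0 := norm_pos_iff.1 (by linarith)
  set θ := NormedSpace.normalize x
  set z := (1 - δ)⁻¹ • y
  have hθ : ‖θ‖ = 1 := NormedSpace.norm_normalize hx0
  have hdecomp : w x - w y = (v θ - v z) + (χ y - χ x) • (u θ - v θ) := by
    rw [h.eq_annulus x hx hx1, h.eq_interior y hy, h.cutoff_interior y hy]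
    module
  have hθz := norm_normalize_sub_inv_smul_le h.width_le hx hx0 hy.le
  have hv : gagliardoKernel p q (v θ - v z) (x - y) ≤
      ENNReal.ofReal (4 ^ q) * gagliardoKernel p q (v θ - v z) (θ - z) :=
    gagliardoKernel_le_mul_of_norm_le hp.ne' hq four_pos
      (fun h0 ↦ by rw [sub_eq_zero.1 h0, sub_self]) hθz
  rw [hdecomp]
  grw [gagliardoKernel_add_le hp.le, hv, h.gagliardoKernel_cutoff_smul_le hp.le hθ]
  exact le_of_eq (by ring)

lemma gagliardoKernel_annulus_annulus_le (h : IsUnitGluing δ L S χ u v w) (hp : 0 ≤ p)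
    {x y : E} (hx : 1 - δ ≤ ‖x‖) (hx1 : ‖x‖ < 1) (hy : 1 - δ ≤ ‖y‖) (hy1 : ‖y‖ < 1) :
    gagliardoKernel p q (w x - w y) (x - y) ≤
      ENNReal.ofReal (4 ^ p) * gagliardoKernel p q
          (u (NormedSpace.normalize x) - u (NormedSpace.normalize y)) (x - y) +
        ENNReal.ofReal (4 ^ p) * gagliardoKernel p q
          (v (NormedSpace.normalize x) - v (NormedSpace.normalize y)) (x - y) +
        ENNReal.ofReal (4 ^ p) * (ENNReal.ofReal (L ^ p) * ENNReal.ofReal (S ^ p)) *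
          truncatedKernel p q δ (x - y) := by
  have hx0 : x ≠ 0 := norm_pos_iff.1 (by linarith [h.width_le])
  set θ := NormedSpace.normalize x
  set ω := NormedSpace.normalize y
  have hdecomp : w x - w y =
      (1 - χ y) • (u θ - u ω) + χ y • (v θ - v ω) + (χ y - χ x) • (u θ - v θ) := by
    rw [h.eq_annulus x hx hx1, h.eq_annulus y hy hy1]
    module
  obtain ⟨hχ0, hχ1⟩ := h.cutoff_mem_Icc y
  have hu : ‖(1 - χ y) • (u θ - u ω)‖ ≤ ‖u θ - u ω‖ := by
    rw [norm_smul]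
    exact mul_le_of_le_one_left (norm_nonneg _) (abs_le.2 ⟨by linarith, by linarith⟩)
  have hv : ‖χ y • (v θ - v ω)‖ ≤ ‖v θ - v ω‖ := by
    rw [norm_smul]
    exact mul_le_of_le_one_left (norm_nonneg _) (abs_le.2 ⟨by linarith, hχ1⟩)
  rw [hdecomp]
  grw [gagliardoKernel_add_add_le hp, gagliardoKernel_mono hp _ hu, gagliardoKernel_mono hp _ hv,
    h.gagliardoKernel_cutoff_smul_le hp (NormedSpace.norm_normalize hx0)]
  exact le_of_eq (by ring)

lemma gagliardoKernel_interior_interior_le (h : IsUnitGluing δ L S χ u v w) (hp : 0 < p)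
    (hq : 0 ≤ q) {x y : E} (hx : ‖x‖ < 1 - δ) (hy : ‖y‖ < 1 - δ) :
    gagliardoKernel p q (w x - w y) (x - y) ≤ ENNReal.ofReal (2 ^ q) *
      gagliardoKernel p q (v ((1 - δ)⁻¹ • x) - v ((1 - δ)⁻¹ • y))
        ((1 - δ)⁻¹ • x - (1 - δ)⁻¹ • y) := by
  rw [h.eq_interior x hx, h.eq_interior y hy]
  have h1δ : (1 - δ)⁻¹ ≤ 2 := inv_le_of_inv_le₀ two_pos (by linarith [h.width_le])
  have : 0 < 1 - δ := by linarith [norm_nonneg x]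
  apply gagliardoKernel_le_mul_of_norm_le hp.ne' hq two_pos
  · intro h0
    rw [sub_eq_zero.1 h0, sub_self]
  · rw [← smul_sub, norm_smul, Real.norm_of_nonneg (by positivity)]
    gcongr

end IsUnitGluing

end UnitGluing

section UnitEstimate

lemma restrict_eq_restrict_sdiff_add {X : Type*} [MeasurableSpace X] (μ : Measure X)
    {s t : Set X} (hst : s ⊆ t) (hs : MeasurableSet s) :
    μ.restrict t = μ.restrict (t \ s) + μ.restrict s := by
  rw [← Measure.restrict_inter_add_sdiff t hs, inter_eq_right.2 hst, add_comm]

variable {E : Type*} [NormedAddCommGroup E] [NormedSpace ℝ E] [MeasurableSpace E] [BorelSpace E]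
  [FiniteDimensional ℝ E] (μ : Measure E) [μ.IsAddHaarMeasure] {p α : ℝ}

section Rescaled

variable {F : Type*} [NormedAddCommGroup F] {δ : ℝ} (q : ℝ)

lemma lintegral_gagliardoKernel_rescale_le (f : E → F) (hδ : 0 ≤ δ) (hδ1 : δ < 1) :
    ∫⁻ x in ball 0 (1 - δ), ∫⁻ y in ball 0 (1 - δ),
        gagliardoKernel p q (f ((1 - δ)⁻¹ • x) - f ((1 - δ)⁻¹ • y))
          ((1 - δ)⁻¹ • x - (1 - δ)⁻¹ • y) ∂μ ∂μ ≤
      mixedEnergy p q (μ.restrict (ball 0 1)) (μ.restrict (ball 0 1)) f := by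
  refine le_trans (lintegral_mono fun x ↦ ?_) (setLIntegral_ball_comp_inv_smul_le μ hδ hδ1
    fun x ↦ ∫⁻ y in ball 0 1, gagliardoKernel p q (f x - f y) (x - y) ∂μ)
  exact setLIntegral_ball_comp_inv_smul_le μ hδ hδ1
    fun y ↦ gagliardoKernel p q (f ((1 - δ)⁻¹ • x) - f y) ((1 - δ)⁻¹ • x - y)

variable [Nontrivial E] [MeasurableSpace F] [BorelSpace F] [SecondCountableTopology F] {f : E → F}

lemma lintegral_gagliardoKernel_normalize_right_le (hf : Measurable f) (hδ1 : δ < 1) (X : Set E) :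
    ∫⁻ x in X, ∫⁻ y in ball 0 1 \ ball 0 (1 - δ),
        gagliardoKernel p q (f (NormedSpace.normalize y) - f x) (NormedSpace.normalize y - x)
        ∂μ ∂μ ≤
      ENNReal.ofReal δ * mixedEnergy p q (sphereMeasure μ) (μ.restrict X) f := by
  rw [mixedEnergy_comm hf, mixedEnergy, ← lintegral_const_mul' _ _ ENNReal.ofReal_ne_top]
  apply lintegral_mono
  intro x
  simp_rw [gagliardoKernel_sub_comm (f x)]
  exact setLIntegral_annulus_comp_normalize_le μ hδ1
    (G := fun θ ↦ gagliardoKernel p q (f θ - f x) (θ - x)) (by fun_prop)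

lemma lintegral_gagliardoKernel_normalize_rescale_le (hf : Measurable f) (hδ : 0 ≤ δ)
    (hδ1 : δ < 1) :
    ∫⁻ x in ball 0 1 \ ball 0 (1 - δ), ∫⁻ y in ball 0 (1 - δ),
        gagliardoKernel p q (f (NormedSpace.normalize x) - f ((1 - δ)⁻¹ • y))
          (NormedSpace.normalize x - (1 - δ)⁻¹ • y) ∂μ ∂μ ≤
      ENNReal.ofReal δ * mixedEnergy p q (sphereMeasure μ) (μ.restrict (ball 0 1)) f := by
  refine le_trans (lintegral_mono fun x ↦ ?_) (setLIntegral_annulus_comp_normalize_le μ hδ1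
    (G := fun θ ↦ ∫⁻ z in ball 0 1, gagliardoKernel p q (f θ - f z) (θ - z) ∂μ) (by fun_prop))
  exact setLIntegral_ball_comp_inv_smul_le μ hδ hδ1 fun z ↦ gagliardoKernel p q
    (f (NormedSpace.normalize x) - f z) (NormedSpace.normalize x - z)

end Rescaled

theorem IsUnitGluing.mixedEnergy_ball_two_eq {F : Type*} [NormedAddCommGroup F] [NormedSpace ℝ F]
    [MeasurableSpace F] [BorelSpace F] [SecondCountableTopology F] {δ S : ℝ} {L : ℝ≥0}
    {χ : E → ℝ} {u v w : E → F} (h : IsUnitGluing δ L S χ u v w) (hw : Measurable w) (q : ℝ) :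
    mixedEnergy p q (μ.restrict (ball 0 2)) (μ.restrict (ball 0 2)) w =
      mixedEnergy p q (μ.restrict (ball 0 2 \ ball 0 1)) (μ.restrict (ball 0 2 \ ball 0 1)) u +
      2 * (mixedEnergy p q (μ.restrict (ball 0 2 \ ball 0 1))
          (μ.restrict (ball 0 1 \ ball 0 (1 - δ))) w +
        ∫⁻ x in ball 0 2 \ ball 0 1, ∫⁻ y in ball 0 (1 - δ),
          gagliardoKernel p q (u x - v ((1 - δ)⁻¹ • y)) (x - y) ∂μ ∂μ) +
      (mixedEnergy p q (μ.restrict (ball 0 1 \ ball 0 (1 - δ)))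
          (μ.restrict (ball 0 1 \ ball 0 (1 - δ))) w +
        2 * mixedEnergy p q (μ.restrict (ball 0 1 \ ball 0 (1 - δ)))
          (μ.restrict (ball 0 (1 - δ))) w +
        mixedEnergy p q (μ.restrict (ball 0 (1 - δ))) (μ.restrict (ball 0 (1 - δ))) w) := by
  have hδ := h.width_pos.le
  have hEE : w =ᵐ[μ.restrict (ball 0 2 \ ball 0 1)] u :=
    ae_restrict_of_forall_mem (measurableSet_ball.diff measurableSet_ball)
      fun x hx ↦ h.eq_exterior x (by simpa using hx.2)
  have hEI : mixedEnergy p q (μ.restrict (ball 0 2 \ ball 0 1)) (μ.restrict (ball 0 (1 - δ))) w =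
      ∫⁻ x in ball 0 2 \ ball 0 1, ∫⁻ y in ball 0 (1 - δ),
        gagliardoKernel p q (u x - v ((1 - δ)⁻¹ • y)) (x - y) ∂μ ∂μ := by
    refine setLIntegral_congr_fun (measurableSet_ball.diff measurableSet_ball) fun x hx ↦
      setLIntegral_congr_fun measurableSet_ball fun y hy ↦ ?_
    rw [h.eq_exterior x (by simpa using hx.2), h.eq_interior y (by simpa using hy)]
  rw [restrict_eq_restrict_sdiff_add μ (ball_subset_ball one_le_two) measurableSet_ball,
    restrict_eq_restrict_sdiff_add μ (s := ball 0 (1 - δ)) (t := ball 0 1)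
      (ball_subset_ball (by linarith)) measurableSet_ball, mixedEnergy_add_self hw,
    mixedEnergy_add_self hw, mixedEnergy_add_right hw, mixedEnergy_congr hEE hEE, hEI]

theorem exists_mixedEnergy_interior_interior_le (hp : 0 < p) (hα : 0 < α) :
    ∃ C : ℝ≥0, ∀ {F : Type v} [NormedAddCommGroup F] [NormedSpace ℝ F]
      {δ S : ℝ} {L : ℝ≥0} {χ : E → ℝ} {u v w : E → F}, IsUnitGluing δ L S χ u v w →
      mixedEnergy p (finrank ℝ E + α) (μ.restrict (ball 0 (1 - δ)))
          (μ.restrict (ball 0 (1 - δ))) w ≤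
        C * mixedEnergy p (finrank ℝ E + α) (μ.restrict (ball 0 1)) (μ.restrict (ball 0 1)) v := by
  set q := finrank ℝ E + α
  refine ⟨Real.toNNReal (2 ^ q), fun {F} _ _ δ S L χ u v w h ↦ ?_⟩
  grw [← lintegral_gagliardoKernel_rescale_le (p := p) μ q v h.width_pos.le
    (by linarith [h.width_le])]
  simp_rw [← lintegral_const_mul' _ _ ENNReal.coe_ne_top]
  refine setLIntegral_mono' measurableSet_ball fun x hx ↦
    setLIntegral_mono' measurableSet_ball fun y hy ↦ ?_
  exact h.gagliardoKernel_interior_interior_le hp (by positivity) (by simpa using hx)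
    (by simpa using hy)

variable [Nontrivial E]

theorem exists_mixedEnergy_exterior_annulus_le (hα : 0 < α) (hαp : α < p) (L : ℝ≥0) :
    ∃ C : ℝ≥0, ∀ {F : Type v} [NormedAddCommGroup F] [NormedSpace ℝ F] [MeasurableSpace F]
      [BorelSpace F] [SecondCountableTopology F] {δ S : ℝ} {χ : E → ℝ} {u v w : E → F},
      IsUnitGluing δ L S χ u v w → Measurable u →
      mixedEnergy p (finrank ℝ E + α) (μ.restrict (ball 0 2 \ ball 0 1))
          (μ.restrict (ball 0 1 \ ball 0 (1 - δ))) w ≤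
        C * (mixedEnergy p (finrank ℝ E + α) (sphereMeasure μ)
            (μ.restrict (ball 0 2 \ ball 0 1)) u +
          ENNReal.ofReal (S ^ p) * ENNReal.ofReal (δ ^ (-α))) := by
  set q := finrank ℝ E + α
  have hp : 0 < p := hα.trans hαp
  obtain ⟨C, hC⟩ := exists_lintegral_lintegral_le_add_truncatedKernel μ hα hαp
  refine ⟨Real.toNNReal (2 ^ p) * Real.toNNReal (2 ^ q) +
    C * (Real.toNNReal (2 ^ p) * Real.toNNReal (L ^ p)), fun {F} _ _ _ _ _ δ S χ u v w h hu ↦ ?_⟩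
  have hδ1 : ENNReal.ofReal δ ≤ 1 := ENNReal.ofReal_le_one.2 (by linarith [h.width_le])
  have hu_le := lintegral_gagliardoKernel_normalize_right_le (p := p) μ q hu (δ := δ)
    (by linarith [h.width_le]) (ball 0 2 \ ball 0 1)
  refine (hC (measurableSet_ball.diff measurableSet_ball) (measurableSet_ball.diff
    measurableSet_ball) sdiff_subset h.width_pos fun x hx y hy ↦
      h.gagliardoKernel_exterior_annulus_le hp (q := q) (by positivity) (by simpa using hx.2)
        (by simpa using hy.2) (by simpa using hy.1)).trans ?_
  simp_rw [lintegral_const_mul' _ _ (ENNReal.mul_ne_top ENNReal.ofReal_ne_top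
    ENNReal.ofReal_ne_top)]
  grw [hu_le, hδ1, one_mul, ENNReal.coe_add, ← mul_add_mul_le_add_mul_add]
  simp only [ENNReal.coe_mul, ENNReal.ofReal]
  exact le_of_eq (by ring)

theorem exists_mixedEnergy_annulus_interior_le (hα : 0 < α) (hαp : α < p) (L : ℝ≥0) :
    ∃ C : ℝ≥0, ∀ {F : Type v} [NormedAddCommGroup F] [NormedSpace ℝ F] [MeasurableSpace F]
      [BorelSpace F] [SecondCountableTopology F] {δ S : ℝ} {χ : E → ℝ} {u v w : E → F},
      IsUnitGluing δ L S χ u v w → Measurable v →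
      mixedEnergy p (finrank ℝ E + α) (μ.restrict (ball 0 1 \ ball 0 (1 - δ)))
          (μ.restrict (ball 0 (1 - δ))) w ≤
        C * (mixedEnergy p (finrank ℝ E + α) (sphereMeasure μ) (μ.restrict (ball 0 1)) v +
          ENNReal.ofReal (S ^ p) * ENNReal.ofReal (δ ^ (-α))) := by
  set q := finrank ℝ E + α
  have hp : 0 < p := hα.trans hαp
  obtain ⟨C, hC⟩ := exists_lintegral_lintegral_le_add_truncatedKernel μ hα hαp
  refine ⟨Real.toNNReal (2 ^ p) * Real.toNNReal (4 ^ q) +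
    C * (Real.toNNReal (2 ^ p) * Real.toNNReal (L ^ p)), fun {F} _ _ _ _ _ δ S χ u v w h hv ↦ ?_⟩
  have hδ1 : ENNReal.ofReal δ ≤ 1 := ENNReal.ofReal_le_one.2 (by linarith [h.width_le])
  have hv_le := lintegral_gagliardoKernel_normalize_rescale_le (p := p) μ q hv h.width_pos.le
    (by linarith [h.width_le])
  refine (hC (measurableSet_ball.diff measurableSet_ball) measurableSet_ball
    (sdiff_subset.trans (ball_subset_ball one_le_two)) h.width_pos fun x hx y hy ↦
      h.gagliardoKernel_annulus_interior_le hp (q := q) (by positivity) (by simpa using hx.2)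
        (by simpa using hx.1) (by simpa using hy)).trans ?_
  simp_rw [lintegral_const_mul' _ _ (ENNReal.mul_ne_top ENNReal.ofReal_ne_top
    ENNReal.ofReal_ne_top)]
  grw [hv_le, hδ1, one_mul, ENNReal.coe_add, ← mul_add_mul_le_add_mul_add]
  simp only [ENNReal.coe_mul, ENNReal.ofReal]
  exact le_of_eq (by ring)

theorem exists_mixedEnergy_annulus_annulus_le (hα : 0 < α) (hαp : α < p) (L : ℝ≥0) :
    ∃ C : ℝ≥0, ∀ {F : Type v} [NormedAddCommGroup F] [NormedSpace ℝ F] [MeasurableSpace F]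
      [BorelSpace F] [SecondCountableTopology F] {δ S : ℝ} {χ : E → ℝ} {u v w : E → F},
      IsUnitGluing δ L S χ u v w → Measurable u → Measurable v →
      mixedEnergy p (finrank ℝ E + α) (μ.restrict (ball 0 1 \ ball 0 (1 - δ)))
          (μ.restrict (ball 0 1 \ ball 0 (1 - δ))) w ≤
        C * (ENNReal.ofReal δ *
            mixedEnergy p (finrank ℝ E - 1 + α) (sphereMeasure μ) (sphereMeasure μ) u +
          mixedEnergy p (finrank ℝ E + α) (sphereMeasure μ) (μ.restrict (ball 0 1)) v +
          ENNReal.ofReal (S ^ p) * ENNReal.ofReal (δ ^ (-α))) := by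
  set q := finrank ℝ E + α
  have hp : 0 < p := hα.trans hαp
  obtain ⟨C, hC⟩ := exists_lintegral_lintegral_le_add_truncatedKernel μ hα hαp
  obtain ⟨Crad, hrad⟩ := exists_mixedEnergy_annulus_comp_normalize_le.{v} μ hα hp.ne'
  obtain ⟨Ctrace, htrace⟩ := exists_mixedEnergy_sphereMeasure_le.{v} μ hα hp
  refine ⟨Real.toNNReal (4 ^ p) * Crad + Real.toNNReal (4 ^ p) * (Crad * Ctrace) +
    C * (Real.toNNReal (4 ^ p) * Real.toNNReal (L ^ p)),
    fun {F} _ _ _ _ _ δ S χ u v w h hu hv ↦ ?_⟩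
  have hδ1 : ENNReal.ofReal δ ≤ 1 := ENNReal.ofReal_le_one.2 (by linarith [h.width_le])
  set N := ball (0 : E) 1 \ ball 0 (1 - δ)
  have hN : MeasurableSet N := measurableSet_ball.diff measurableSet_ball
  have hu_le := hrad hu δ h.width_le
  have hv_le := (hrad hv δ h.width_le).trans (mul_le_mul_right (mul_le_mul' hδ1 (htrace hv)) _)
  refine (hC hN hN (sdiff_subset.trans (ball_subset_ball one_le_two)) h.width_pos
    fun x hx y hy ↦ h.gagliardoKernel_annulus_annulus_le hp.le (by simpa using hx.2)
      (by simpa using hx.1) (by simpa using hy.2) (by simpa using hy.1)).trans ?_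
  rw [lintegral_lintegral_const_mul_add ENNReal.ofReal_ne_top ENNReal.ofReal_ne_top (by fun_prop)]
  unfold mixedEnergy at hu_le hv_le ⊢
  grw [hu_le, hv_le, one_mul, ENNReal.coe_add, ← mul_add_mul_le_add_mul_add, ENNReal.coe_add,
    ← mul_add_mul_le_add_mul_add]
  simp only [ENNReal.coe_mul, ENNReal.ofReal]
  exact le_of_eq (by ring)

theorem exists_mixedEnergy_ball_two_le (hα : 0 < α) (hαp : α < p) (L : ℝ≥0) :
    ∃ C : ℝ≥0, ∀ {F : Type v} [NormedAddCommGroup F] [NormedSpace ℝ F] [MeasurableSpace F]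
      [BorelSpace F] [SecondCountableTopology F] {δ S : ℝ} {χ : E → ℝ} {u v w : E → F},
      IsUnitGluing δ L S χ u v w → Measurable u → Measurable v → Measurable w →
      mixedEnergy p (finrank ℝ E + α) (μ.restrict (ball 0 2)) (μ.restrict (ball 0 2)) w ≤
        mixedEnergy p (finrank ℝ E + α) (μ.restrict (ball 0 2 \ ball 0 1))
            (μ.restrict (ball 0 2 \ ball 0 1)) u +
          C * (mixedEnergy p (finrank ℝ E + α) (μ.restrict (ball 0 1)) (μ.restrict (ball 0 1)) v +
            (mixedEnergy p (finrank ℝ E + α) (sphereMeasure μ)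
                (μ.restrict (ball 0 2 \ ball 0 1)) u +
              mixedEnergy p (finrank ℝ E + α) (sphereMeasure μ) (μ.restrict (ball 0 1)) v) +
            ENNReal.ofReal δ *
              mixedEnergy p (finrank ℝ E - 1 + α) (sphereMeasure μ) (sphereMeasure μ) u +
            ENNReal.ofReal (S ^ p) * ENNReal.ofReal (δ ^ (-α))) := by
  obtain ⟨C₁, h₁⟩ := exists_mixedEnergy_exterior_annulus_le.{v} μ hα hαp L
  obtain ⟨C₂, h₂⟩ := exists_lintegral_exterior_interior_le.{v} μ hα hαp
  obtain ⟨C₃, h₃⟩ := exists_mixedEnergy_annulus_interior_le.{v} μ hα hαp L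
  obtain ⟨C₄, h₄⟩ := exists_mixedEnergy_annulus_annulus_le.{v} μ hα hαp L
  obtain ⟨C₅, h₅⟩ := exists_mixedEnergy_interior_interior_le.{v} μ (hα.trans hαp) hα
  refine ⟨2 * (C₁ + C₂ + C₃) + C₄ + C₅, fun {F} _ _ _ _ _ δ S χ u v w h hu hv hw ↦ ?_⟩
  set q := finrank ℝ E + α
  set T := ENNReal.ofReal (S ^ p) * ENNReal.ofReal (δ ^ (-α))
  set A := mixedEnergy p q (sphereMeasure μ) (μ.restrict (ball 0 2 \ ball 0 1)) u
  set B := mixedEnergy p q (sphereMeasure μ) (μ.restrict (ball 0 1)) v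
  set D := ENNReal.ofReal δ *
    mixedEnergy p (finrank ℝ E - 1 + α) (sphereMeasure μ) (sphereMeasure μ) u
  set V := mixedEnergy p q (μ.restrict (ball 0 1)) (μ.restrict (ball 0 1)) v
  set R := V + (A + B) + D + T
  have hAT : A + T ≤ R := le_self_add.trans_eq (show A + T + (V + B + D) = R by ring)
  have hABT : A + B + T ≤ R := le_self_add.trans_eq (show A + B + T + (V + D) = R by ring)
  have hBT : B + T ≤ R := le_self_add.trans_eq (show B + T + (V + A + D) = R by ring)
  have hDBT : D + B + T ≤ R := le_self_add.trans_eq (show D + B + T + (V + A) = R by ring)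
  have hV : V ≤ R := le_self_add.trans_eq (show V + (A + B + D + T) = R by ring)
  have hδ1 : δ < 1 := by linarith [h.width_le]
  rw [h.mixedEnergy_ball_two_eq μ hw]
  grw [h₁ h hu, h₂ hu hv h.width_pos hδ1 h.norm_sub_le, h₃ h hv, h₄ h hu hv,
    (h₅ h).trans (mul_le_mul_right hV _), hAT, hABT, hBT, hDBT]
  push_cast
  exact le_of_eq (by ring)

end UnitEstimate

section Scaling

variable {E : Type*} [NormedAddCommGroup E] [NormedSpace ℝ E] {r : ℝ}

lemma preimage_smul_ball_zero (hr : 0 < r) (a : ℝ) :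
    (r • · : E → E) ⁻¹' ball 0 a = ball 0 (a / r) := by
  ext x
  simp [norm_smul, abs_of_pos hr, lt_div_iff₀' hr]

lemma image_comp_smul_ball_zero {X : Type*} (hr : 0 < r) (f : E → X) (a : ℝ) :
    (fun x ↦ f (r • x)) '' ball 0 (a / r) = f '' ball 0 a := by
  rw [← preimage_smul_ball_zero hr, ← Function.comp_def f, image_comp,
    image_preimage_eq _ fun x ↦ ⟨r⁻¹ • x, smul_inv_smul₀ hr.ne' x⟩]

lemma ofReal_rpow_mul_ofReal_rpow (hr : 0 < r) (a b : ℝ) :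
    ENNReal.ofReal (r ^ a) * ENNReal.ofReal (r ^ b) = ENNReal.ofReal (r ^ (a + b)) := by
  rw [← ENNReal.ofReal_mul (by positivity), Real.rpow_add hr]

lemma preimage_smul_sphere_zero (hr : 0 < r) : (r • · : E → E) ⁻¹' sphere 0 r = sphere 0 1 := by
  ext x
  simp [norm_smul, abs_of_pos hr, hr.ne']

variable [MeasurableSpace E] [BorelSpace E]

lemma map_smul_hausdorffMeasure {d : ℝ} (hd : 0 ≤ d) (hr : 0 < r) :
    (μH[d] : Measure E).map (r • ·) = ENNReal.ofReal (r ^ (-d)) • (μH[d] : Measure E) := by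
  refine Measure.ext fun A _ ↦ ?_
  rw [(measurableEmbedding_const_smul₀ hr.ne').map_apply, Set.preimage_smul₀ hr.ne',
    Measure.hausdorffMeasure_smul₀ hd (inv_ne_zero hr.ne'), Measure.smul_apply, ENNReal.smul_def]
  rw [ENNReal.ofReal]
  congr 2
  ext
  rw [Real.coe_toNNReal _ (by positivity), NNReal.coe_rpow, coe_nnnorm, norm_inv,
    Real.norm_of_nonneg hr.le, Real.inv_rpow hr.le, Real.rpow_neg hr.le]

variable [FiniteDimensional ℝ E] (μ : Measure E) {F : Type*} [NormedAddCommGroup F] {p α : ℝ}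

lemma map_smul_sphereMeasure_le [Nontrivial E] (hr : 0 < r) {C : ℝ≥0}
    (hC : sphereMeasure μ ≤ (C : ℝ≥0∞) • surfaceMeasure E 1) :
    (sphereMeasure μ).map (r • ·) ≤ (C * ENNReal.ofReal (r ^ (-((finrank ℝ E : ℝ) - 1)))) •
      surfaceMeasure E r := by
  have hdim : (1 : ℝ) ≤ finrank ℝ E := by exact_mod_cast finrank_pos
  refine (Measure.map_mono hC (measurable_const_smul r)).trans_eq ?_
  rw [Measure.map_smul, surfaceMeasure, ← preimage_smul_sphere_zero hr,
    ← (measurableEmbedding_const_smul₀ hr.ne').restrict_map,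
    map_smul_hausdorffMeasure (by linarith) hr, Measure.restrict_smul, smul_smul]

lemma mixedEnergy_sphereMeasure_comp_smul_le [Nontrivial E] (hr : 0 < r) {C : ℝ≥0}
    (hC : sphereMeasure μ ≤ (C : ℝ≥0∞) • surfaceMeasure E 1)
    (f : E → F) :
    ENNReal.ofReal (r ^ (finrank ℝ E - α)) * mixedEnergy p (finrank ℝ E - 1 + α)
        (sphereMeasure μ) (sphereMeasure μ) (fun x ↦ f (r • x)) ≤
      C * C * (ENNReal.ofReal r * mixedEnergy p (finrank ℝ E - 1 + α)
        (surfaceMeasure E r)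
        (surfaceMeasure E r) f) := by
  have hle := map_smul_sphereMeasure_le μ hr hC
  rw [mixedEnergy_comp_smul hr]
  grw [mixedEnergy_mono hle hle]
  rw [mixedEnergy_smul_smul _ (ENNReal.mul_ne_top ENNReal.coe_ne_top ENNReal.ofReal_ne_top)]
  have hpow : ENNReal.ofReal (r ^ (finrank ℝ E - α)) * ENNReal.ofReal (r ^ (finrank ℝ E - 1 + α)) *
      ENNReal.ofReal (r ^ (-((finrank ℝ E : ℝ) - 1))) *
        ENNReal.ofReal (r ^ (-((finrank ℝ E : ℝ) - 1))) = ENNReal.ofReal r := by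
    simp only [ofReal_rpow_mul_ofReal_rpow hr]
    ring_nf
    rw [Real.rpow_one]
  rw [← hpow]
  exact le_of_eq (by ring)

variable [μ.IsAddHaarMeasure]

lemma map_smul_restrict_preimage (hr : 0 < r) (A : Set E) :
    (μ.restrict ((r • ·) ⁻¹' A)).map (r • ·) =
      ENNReal.ofReal (r ^ (-(finrank ℝ E : ℝ))) • μ.restrict A := by
  rw [← (measurableEmbedding_const_smul₀ hr.ne').restrict_map, Measure.map_addHaar_smul μ hr.ne',
    Measure.restrict_smul, abs_of_pos (by positivity), Real.rpow_neg hr.le, Real.rpow_natCast]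

lemma mixedEnergy_restrict_eq_mul (hr : 0 < r) (A : Set E) (f : E → F) :
    mixedEnergy p (finrank ℝ E + α) (μ.restrict A) (μ.restrict A) f =
      ENNReal.ofReal (r ^ (finrank ℝ E - α)) *
        mixedEnergy p (finrank ℝ E + α) (μ.restrict ((r • ·) ⁻¹' A)) (μ.restrict ((r • ·) ⁻¹' A))
          fun x ↦ f (r • x) := by
  rw [mixedEnergy_comp_smul hr, map_smul_restrict_preimage μ hr,
    mixedEnergy_smul_smul _ ENNReal.ofReal_ne_top]
  have hpow : ENNReal.ofReal (r ^ (finrank ℝ E - α)) * ENNReal.ofReal (r ^ (finrank ℝ E + α)) *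
        ENNReal.ofReal (r ^ (-(finrank ℝ E : ℝ))) *
          ENNReal.ofReal (r ^ (-(finrank ℝ E : ℝ))) = 1 := by
    simp only [ofReal_rpow_mul_ofReal_rpow hr]
    ring_nf
    rw [Real.rpow_zero, ENNReal.ofReal_one]
  simp only [← mul_assoc, hpow, one_mul]

variable [Nontrivial E]

lemma mixedEnergy_sphereMeasure_restrict_comp_smul_le (hr : 0 < r) {C : ℝ≥0}
    (hC : sphereMeasure μ ≤ (C : ℝ≥0∞) • surfaceMeasure E 1)
    (A : Set E) (f : E → F) :
    ENNReal.ofReal (r ^ (finrank ℝ E - α)) * mixedEnergy p (finrank ℝ E + α) (sphereMeasure μ)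
        (μ.restrict ((r • ·) ⁻¹' A)) (fun x ↦ f (r • x)) ≤
      C * (ENNReal.ofReal r * mixedEnergy p (finrank ℝ E + α)
        (surfaceMeasure E r) (μ.restrict A) f) := by
  rw [mixedEnergy_comp_smul hr, map_smul_restrict_preimage μ hr]
  grw [mixedEnergy_mono (map_smul_sphereMeasure_le μ hr hC) le_rfl]
  rw [mixedEnergy_smul_smul _ ENNReal.ofReal_ne_top]
  have hpow : ENNReal.ofReal (r ^ (finrank ℝ E - α)) * ENNReal.ofReal (r ^ (finrank ℝ E + α)) *
      ENNReal.ofReal (r ^ (-((finrank ℝ E : ℝ) - 1))) *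
        ENNReal.ofReal (r ^ (-(finrank ℝ E : ℝ))) = ENNReal.ofReal r := by
    simp only [ofReal_rpow_mul_ofReal_rpow hr]
    ring_nf
    rw [Real.rpow_one]
  rw [← hpow]
  exact le_of_eq (by ring)

lemma add_mul_add_mul_add_le (K : ℝ≥0) (V X Y T : ℝ≥0∞) :
    V + K * X + K * K * Y + T ≤ (1 + K + K * K : ℝ≥0) * (V + X + Y + T) := by
  have hVT : V + T ≤ V + X + Y + T := add_le_add_left (le_self_add.trans le_self_add) T
  have hX : X ≤ V + X + Y + T := le_add_self.trans (le_self_add.trans le_self_add)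
  have hY : Y ≤ V + X + Y + T := le_add_self.trans le_self_add
  set R := V + X + Y + T
  calc V + K * X + K * K * Y + T = V + T + K * X + K * K * Y := by ring
    _ ≤ R + K * R + K * K * R := by grw [hVT, hX, hY]
    _ = (1 + K + K * K : ℝ≥0) * R := by
        push_cast
        ring

theorem exists_mixedEnergy_ball_two_mul_le (hα : 0 < α) (hαp : α < p) (L : ℝ≥0) :
    ∃ C : ℝ≥0, ∀ {F : Type v} [NormedAddCommGroup F] [NormedSpace ℝ F] [MeasurableSpace F]
      [BorelSpace F] [SecondCountableTopology F] {r δ S : ℝ} {χ : E → ℝ} {u v w : E → F}, 0 < r →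
      IsUnitGluing δ L S χ (fun x ↦ u (r • x)) (fun x ↦ v (r • x)) (fun x ↦ w (r • x)) →
      Measurable u → Measurable v → Measurable w →
      mixedEnergy p (finrank ℝ E + α) (μ.restrict (ball 0 (2 * r)))
          (μ.restrict (ball 0 (2 * r))) w ≤
        mixedEnergy p (finrank ℝ E + α) (μ.restrict (ball 0 (2 * r) \ ball 0 r))
            (μ.restrict (ball 0 (2 * r) \ ball 0 r)) u +
          C * (mixedEnergy p (finrank ℝ E + α) (μ.restrict (ball 0 r)) (μ.restrict (ball 0 r)) v +
            ENNReal.ofReal r *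
              (mixedEnergy p (finrank ℝ E + α) (surfaceMeasure E r)
                  (μ.restrict (ball 0 (2 * r) \ ball 0 r)) u +
                mixedEnergy p (finrank ℝ E + α) (surfaceMeasure E r) (μ.restrict (ball 0 r)) v) +
            ENNReal.ofReal (δ * r) *
              mixedEnergy p (finrank ℝ E - 1 + α) (surfaceMeasure E r) (surfaceMeasure E r) u +
            ENNReal.ofReal (δ ^ (-α) * r ^ (finrank ℝ E - α) * S ^ p)) := by
  obtain ⟨C, hC⟩ := exists_mixedEnergy_ball_two_le.{v} μ hα hαp L
  obtain ⟨K, hK⟩ := exists_sphereMeasure_le_smul_surfaceMeasure μ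
  refine ⟨C * (1 + K + K * K), fun {F} _ _ _ _ _ r δ S χ u v w hr h hu hv hw ↦ ?_⟩
  set q := finrank ℝ E + α
  set k := ENNReal.ofReal (r ^ (finrank ℝ E - α)) with hk
  set V := mixedEnergy p q (μ.restrict (ball 0 r)) (μ.restrict (ball 0 r)) v with hV
  set A := mixedEnergy p q (surfaceMeasure E r) (μ.restrict (ball 0 (2 * r) \ ball 0 r)) u
  set B := mixedEnergy p q (surfaceMeasure E r) (μ.restrict (ball 0 r)) v
  set D := mixedEnergy p (finrank ℝ E - 1 + α) (surfaceMeasure E r) (surfaceMeasure E r) u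
  set T := ENNReal.ofReal (δ ^ (-α) * r ^ (finrank ℝ E - α) * S ^ p)
  have hT : k * (ENNReal.ofReal (S ^ p) * ENNReal.ofReal (δ ^ (-α))) = T := by
    have : 0 < δ := h.width_pos
    rw [← mul_assoc, mul_right_comm, mul_comm k, hk, ← ENNReal.ofReal_mul (by positivity),
      ← ENNReal.ofReal_mul (by positivity)]
  have hA := mixedEnergy_sphereMeasure_restrict_comp_smul_le (p := p) (α := α) μ hr hK
    (ball 0 (2 * r) \ ball 0 r) u
  have hB := mixedEnergy_sphereMeasure_restrict_comp_smul_le (p := p) (α := α) μ hr hK (ball 0 r) v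
  have hD := mixedEnergy_sphereMeasure_comp_smul_le (p := p) (α := α) μ hr hK u
  rw [mixedEnergy_restrict_eq_mul μ hr] at hV
  rw [mixedEnergy_restrict_eq_mul μ hr, mixedEnergy_restrict_eq_mul μ hr _ u]
  rw [preimage_sdiff] at hA ⊢
  simp only [preimage_smul_ball_zero hr, mul_div_cancel_right₀ (2 : ℝ) hr.ne', div_self hr.ne']
    at hA hB hV ⊢
  grw [hC h (hu.comp (measurable_const_smul r)) (hv.comp (measurable_const_smul r))
    (hw.comp (measurable_const_smul r)), mul_add, mul_left_comm, mul_add k, hT, mul_add k,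
    mul_left_comm k (ENNReal.ofReal δ), hD, mul_add k, ← hV, mul_add k, hA, hB]
  rw [ENNReal.coe_mul, mul_assoc (C : ℝ≥0∞) _ (_ + T)]
  grw [← add_mul_add_mul_add_le K]
  apply le_of_eq
  rw [ENNReal.ofReal_mul h.width_pos.le]
  ring

end Scaling

section Trace

variable {E F : Type*} [NormedAddCommGroup E] [NormedSpace ℝ E] [MeasurableSpace E] [BorelSpace E]
  [FiniteDimensional ℝ E] (μ : Measure E) [μ.IsAddHaarMeasure] [NormedAddCommGroup F] {p q : ℝ}
  {v : E → F} {θ : E}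

lemma setLIntegral_ball_inv_norm_rpow_eq_top (hq : finrank ℝ E < q) (hθ : ‖θ‖ = 1) :
    ∫⁻ x in ball θ 1, ENNReal.ofReal ((‖x‖ ^ q)⁻¹) ∂μ = ∞ := by
  set I := ∫⁻ x in ball θ 1, ENNReal.ofReal ((‖x‖ ^ q)⁻¹) ∂μ with hI
  have hpos : I ≠ 0 := by
    rw [hI, ← pos_iff_ne_zero, setLIntegral_pos_iff (by fun_prop)]
    refine (measure_ball_pos μ θ one_pos).trans_le (measure_mono fun x hx ↦ ⟨?_, hx⟩)
    have hx0 : x ≠ 0 := by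
      rintro rfl
      simp [hθ] at hx
    have : 0 < ‖x‖ := norm_pos_iff.2 hx0
    simp only [Function.mem_support, ne_eq, ENNReal.ofReal_eq_zero, not_le]
    positivity
  have hle : ENNReal.ofReal (2 ^ (q - finrank ℝ E)) * I ≤ I := by
    have hhom (x : E) : ENNReal.ofReal ((‖(2⁻¹ : ℝ) • x‖ ^ q)⁻¹) =
        ENNReal.ofReal (2 ^ q) * ENNReal.ofReal ((‖x‖ ^ q)⁻¹) := by
      rw [norm_smul, Real.norm_of_nonneg (by positivity), Real.mul_rpow (by positivity)
        (norm_nonneg x), mul_inv, ← Real.inv_rpow (by positivity), inv_inv,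
        ENNReal.ofReal_mul (by positivity)]
    calc ENNReal.ofReal (2 ^ (q - finrank ℝ E)) * I =
        ENNReal.ofReal (2⁻¹ ^ finrank ℝ E) *
          ∫⁻ x in ball θ 1, ENNReal.ofReal ((‖(2⁻¹ : ℝ) • x‖ ^ q)⁻¹) ∂μ := by
          simp_rw [hhom]
          rw [lintegral_const_mul' _ _ ENNReal.ofReal_ne_top, ← mul_assoc,
            ← ENNReal.ofReal_mul (by positivity), Real.rpow_sub two_pos, Real.rpow_natCast,
            inv_pow, div_eq_inv_mul]
      _ ≤ _ := by grw [ball_subset_preimage_two_inv_smul_ball hθ]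
      _ = I := (setLIntegral_eq_mul_setLIntegral_comp_smul μ (inv_pos.2 two_pos) _ _).symm
  by_contra hfin
  have h1 := (ENNReal.mul_le_mul_iff_left hpos hfin).1 (hle.trans_eq (one_mul I).symm)
  exact (ENNReal.ofReal_le_one.1 h1).not_gt (Real.one_lt_rpow one_lt_two (sub_pos.2 hq))

lemma setLIntegral_gagliardoKernel_eq_top (hp : 0 ≤ p) (hq : finrank ℝ E < q) (hθ : ‖θ‖ = 1)
    {ε : ℝ} (hε : 0 < ε) (hv : ∀ x ∈ ball 0 1, ε ≤ ‖v θ - v x‖) :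
    ∫⁻ x in ball 0 1, gagliardoKernel p q (v θ - v x) (θ - x) ∂μ = ∞ := by
  have hball : (θ - ·) ⁻¹' ball θ 1 = ball 0 1 := by
    ext x
    simp
  have hle : ENNReal.ofReal (ε ^ p) * ∫⁻ x in ball 0 1, ENNReal.ofReal ((‖θ - x‖ ^ q)⁻¹) ∂μ ≤
      ∫⁻ x in ball 0 1, gagliardoKernel p q (v θ - v x) (θ - x) ∂μ := by
    rw [← lintegral_const_mul' _ _ ENNReal.ofReal_ne_top]
    refine setLIntegral_mono' measurableSet_ball fun x hx ↦ ?_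
    rw [gagliardoKernel_eq_mul]
    gcongr
    exact hv x hx
  rw [← hball, (Measure.measurePreserving_sub_left μ θ).setLIntegral_comp_preimage_emb
    (MeasurableEquiv.subLeft θ).measurableEmbedding (fun x ↦ ENNReal.ofReal ((‖x‖ ^ q)⁻¹)),
    setLIntegral_ball_inv_norm_rpow_eq_top μ hq hθ,
    ENNReal.mul_top (ENNReal.ofReal_pos.2 (by positivity)).ne', hball, top_le_iff] at hle
  exact hle

variable [MeasurableSpace F] [BorelSpace F] [SecondCountableTopology F]

lemma mem_closure_image_ball_of_mixedEnergy_ne_top (hp : 0 ≤ p) (hq : finrank ℝ E < q)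
    (hv : Measurable v)
    (hfin : mixedEnergy p q (sphereMeasure μ) (μ.restrict (ball 0 1)) v ≠ ∞) (hθ : ‖θ‖ = 1)
    (hc : ContinuousWithinAt v (sphere 0 1) θ) : v θ ∈ closure (v '' ball 0 1) := by
  by_contra hmem
  obtain ⟨ε, hε, hfar⟩ : ∃ ε > 0, ∀ x ∈ ball (0 : E) 1, ε ≤ dist (v θ) (v x) := by
    simpa [Metric.mem_closure_iff] using hmem
  obtain ⟨b, hb, hclose⟩ := (Metric.continuousWithinAt_iff.1 hc) (ε / 2) (half_pos hε)
  have hae : ∀ᵐ ω ∂sphereMeasure μ,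
      ∫⁻ x in ball 0 1, gagliardoKernel p q (v ω - v x) (ω - x) ∂μ < ∞ :=
    ae_lt_top (by fun_prop) hfin
  obtain ⟨ω, hωb, hω, hω_fin⟩ : ∃ ω ∈ ball θ b, ‖ω‖ = 1 ∧
      ∫⁻ x in ball 0 1, gagliardoKernel p q (v ω - v x) (ω - x) ∂μ < ∞ :=
    ((frequently_ae_mem_iff.2 (sphereMeasure_ball_pos μ hθ hb).ne').and_eventually
      ((ae_norm_eq_one_sphereMeasure μ).and hae)).exists
  refine hω_fin.ne (setLIntegral_gagliardoKernel_eq_top μ hp hq hω (half_pos hε) fun x hx ↦ ?_)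
  rw [← dist_eq_norm]
  linarith [hclose (mem_sphere_zero_iff_norm.2 hω) hωb, hfar x hx,
    dist_triangle_left (v θ) (v x) (v ω)]

lemma mem_closure_image_ball_of_mixedEnergy_surfaceMeasure_ne_top [Nontrivial E] {α r : ℝ}
    (hp : 0 ≤ p) (hα : 0 < α) (hr : 0 < r) (hv : Measurable v)
    (hvc : ContinuousOn v (sphere 0 r))
    (hfin : mixedEnergy p (finrank ℝ E + α) (surfaceMeasure E r) (μ.restrict (ball 0 r)) v ≠ ∞)
    (hθ : ‖θ‖ = 1) : v (r • θ) ∈ closure (v '' ball 0 r) := by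
  obtain ⟨C, hC⟩ := exists_sphereMeasure_le_smul_surfaceMeasure μ
  have hle := mixedEnergy_sphereMeasure_restrict_comp_smul_le (p := p) (α := α) μ hr hC (ball 0 r) v
  rw [← image_comp_smul_ball_zero hr]
  rw [preimage_smul_ball_zero hr] at hle
  rw [div_self hr.ne'] at hle ⊢
  refine mem_closure_image_ball_of_mixedEnergy_ne_top (q := finrank ℝ E + α) μ hp (by linarith)
    (hv.comp (measurable_const_smul r)) (fun htop ↦ ?_) hθ ?_
  · rw [htop, ENNReal.mul_top (ENNReal.ofReal_pos.2 (by positivity)).ne', top_le_iff] at hle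
    exact ENNReal.mul_ne_top ENNReal.coe_ne_top (ENNReal.mul_ne_top ENNReal.ofReal_ne_top hfin) hle
  · have hmaps : MapsTo (r • · : E → E) (sphere 0 1) (sphere 0 r) :=
      (preimage_smul_sphere_zero hr).ge
    exact (hvc.comp (continuous_const_smul r).continuousOn hmaps) θ (mem_sphere_zero_iff_norm.2 hθ)

end Trace

section Distance

variable {E F : Type*} [NormedAddCommGroup E] [NormedSpace ℝ E] [Nontrivial E]
  [NormedAddCommGroup F] [NormedSpace ℝ F] {δ S : ℝ} {L : ℝ≥0} {χ : E → ℝ} {u v w : E → F}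

namespace IsUnitGluing

lemma nonneg (h : IsUnitGluing δ L S χ u v w) : 0 ≤ S := by
  obtain ⟨θ, hθ⟩ := exists_norm_eq E zero_le_one
  exact (norm_nonneg _).trans (h.norm_sub_le θ hθ)

lemma infDist_le (h : IsUnitGluing δ L S χ u v w)
    (hv : ∀ θ, ‖θ‖ = 1 → v θ ∈ closure (v '' ball 0 1)) {R : ℝ} (hR : 1 ≤ R) {x : E}
    (hx : x ∈ ball 0 R) : infDist (w x) (u '' ball 0 R ∪ v '' ball 0 R) ≤ S := by
  set T := u '' ball 0 R ∪ v '' ball 0 R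
  have hvT : ∀ y, ‖y‖ ≤ 1 → v y ∈ closure T := fun y hy ↦ by
    refine closure_mono ((image_mono (ball_subset_ball hR)).trans subset_union_right) ?_
    obtain hy | hy := hy.lt_or_eq
    · exact subset_closure (mem_image_of_mem v (mem_ball_zero_iff.2 hy))
    · exact hv y hy
  have hle : ∀ a, a ∈ closure T → infDist (w x) T ≤ ‖w x - a‖ := fun a ha ↦ by
    rw [← infDist_closure, ← dist_eq_norm]
    exact infDist_le_dist_of_mem ha
  have hle_of_eq : ∀ a, a ∈ closure T → w x = a → infDist (w x) T ≤ S := fun a ha hwa ↦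
    (hle a ha).trans (by simp [hwa, h.nonneg])
  have h1δ : 0 < 1 - δ := by linarith [h.width_le]
  obtain hx1 | hx1 := le_or_gt 1 ‖x‖
  · exact hle_of_eq _ (subset_closure (Or.inl (mem_image_of_mem u hx))) (h.eq_exterior x hx1)
  obtain hxδ | hxδ := lt_or_ge ‖x‖ (1 - δ)
  · refine hle_of_eq _ (hvT _ ?_) (h.eq_interior x hxδ)
    rw [norm_smul, norm_inv, Real.norm_of_nonneg h1δ.le]
    exact (inv_mul_le_one₀ h1δ).2 hxδ.le
  · have hθ : ‖NormedSpace.normalize x‖ = 1 :=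
      NormedSpace.norm_normalize (norm_pos_iff.1 (h1δ.trans_le hxδ))
    obtain ⟨hχ0, hχ1⟩ := h.cutoff_mem_Icc x
    have hsub : w x - v (NormedSpace.normalize x) =
        (1 - χ x) • (u (NormedSpace.normalize x) - v (NormedSpace.normalize x)) := by
      rw [h.eq_annulus x hxδ hx1]
      module
    calc infDist (w x) T ≤ ‖w x - v (NormedSpace.normalize x)‖ := hle _ (hvT _ hθ.le)
      _ = (1 - χ x) * ‖u (NormedSpace.normalize x) - v (NormedSpace.normalize x)‖ := by
          rw [hsub, norm_smul, Real.norm_of_nonneg (sub_nonneg.2 hχ1)]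
      _ ≤ ‖u (NormedSpace.normalize x) - v (NormedSpace.normalize x)‖ :=
          mul_le_of_le_one_left (norm_nonneg _) (by linarith)
      _ ≤ S := h.norm_sub_le _ hθ

end IsUnitGluing

variable [MeasurableSpace E] [BorelSpace E] [FiniteDimensional ℝ E] (μ : Measure E)
  [μ.IsAddHaarMeasure] [MeasurableSpace F] [BorelSpace F] [SecondCountableTopology F] {p α r : ℝ}

theorem infDist_le_of_mixedEnergy_ne_top (hp : 0 ≤ p) (hα : 0 < α) (hr : 0 < r)
    (h : IsUnitGluing δ L S χ (fun x ↦ u (r • x)) (fun x ↦ v (r • x)) (fun x ↦ w (r • x)))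
    (hv : Measurable v) (hvc : ContinuousOn v (sphere 0 r))
    (hfin : mixedEnergy p (finrank ℝ E + α) (surfaceMeasure E r) (μ.restrict (ball 0 r)) v ≠ ∞)
    {R : ℝ} (hR : r ≤ R) {x : E} (hx : x ∈ ball 0 R) :
    infDist (w x) (u '' ball 0 R ∪ v '' ball 0 R) ≤ S := by
  have hcl (θ : E) (hθ : ‖θ‖ = 1) :=
    mem_closure_image_ball_of_mixedEnergy_surfaceMeasure_ne_top μ hp hα hr hv hvc hfin hθ
  rw [← image_comp_smul_ball_zero hr v r, div_self hr.ne'] at hcl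
  have hxr : r⁻¹ • x ∈ ball (0 : E) (R / r) := by
    rwa [← preimage_smul_ball_zero hr, mem_preimage, smul_inv_smul₀ hr.ne']
  have hle := h.infDist_le hcl ((one_le_div hr).2 hR) hxr
  rwa [image_comp_smul_ball_zero hr, image_comp_smul_ball_zero hr, smul_inv_smul₀ hr.ne'] at hle

end Distance

section Euclidean

variable {n M : ℕ} {s p r δ : ℝ} {η : ℝ → ℝ} {u v : Euc n → Euc M}

lemma surfaceMeasure_euc (n : ℕ) (r : ℝ) :
    surfaceMeasure (Euc n) r = μH[(n : ℝ) - 1].restrict (sphere 0 r) := by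
  rw [surfaceMeasure, finrank_euclideanSpace_fin]

lemma measurable_glue (hη : Measurable η) (hu : Measurable u) (hv : Measurable v) :
    Measurable (glue n M r δ η u v) := by
  unfold glue
  refine hu.ite (measurableSet_le measurable_const measurable_norm) <|
    Measurable.ite (measurableSet_le measurable_norm measurable_const) ?_ ?_ <;> fun_prop

lemma abs_cutoff_sub_le (hr : 0 < r) (hδ : 0 < δ) (hη : ∀ t, η t ∈ Icc 0 1) {K : ℝ≥0}
    (hL : LipschitzWith (K / (δ * r)).toNNReal η) (x y : Euc n) :
    |η (r * ‖x‖) - η (r * ‖y‖)| ≤ max 1 K * min 1 (‖x - y‖ / δ) := by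
  have hdist : |η (r * ‖x‖) - η (r * ‖y‖)| ≤ K * (‖x - y‖ / δ) := by
    calc |η (r * ‖x‖) - η (r * ‖y‖)| ≤ K / (δ * r) * |r * ‖x‖ - r * ‖y‖| := by
          simpa [Real.dist_eq, Real.coe_toNNReal _ (show 0 ≤ K / (δ * r) by positivity)]
            using hL.dist_le_mul (r * ‖x‖) (r * ‖y‖)
      _ ≤ K / (δ * r) * (r * ‖x - y‖) := by
          rw [← mul_sub, abs_mul, abs_of_pos hr]
          grw [abs_norm_sub_norm_le]
      _ = K * (‖x - y‖ / δ) := by field_simp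
  have hone : |η (r * ‖x‖) - η (r * ‖y‖)| ≤ 1 :=
    abs_sub_le_of_le_of_le (hη _).1 (hη _).2 (hη _).1 (hη _).2 |>.trans_eq (sub_zero 1)
  rw [mul_min_of_nonneg _ _ (by positivity), mul_one]
  refine le_min (hone.trans (le_max_left _ _)) (hdist.trans ?_)
  gcongr
  exact le_max_right _ _

lemma isUnitGluing_glue (hr : 0 < r) (hδ : 0 < δ) (hδ2 : δ ≤ 1 / 2) (hη : ∀ t, η t ∈ Icc 0 1)
    (hη1 : ∀ t, 0 ≤ t → t ≤ (1 - δ) * r → η t = 1) (hη0 : ∀ t, r ≤ t → η t = 0) {K : ℝ≥0}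
    (hL : LipschitzWith (K / (δ * r)).toNNReal η) {S : ℝ}
    (hS : ∀ θ ∈ sphere 0 r, ‖u θ - v θ‖ ≤ S) :
    IsUnitGluing δ (max 1 K) S (fun x ↦ η (r * ‖x‖)) (fun x ↦ u (r • x)) (fun x ↦ v (r • x))
      (fun x ↦ glue n M r δ η u v (r • x)) := by
  have hnorm (x : Euc n) : ‖r • x‖ = r * ‖x‖ := by rw [norm_smul, Real.norm_of_nonneg hr.le]
  have hle (x : Euc n) : r ≤ ‖r • x‖ ↔ 1 ≤ ‖x‖ := by rw [hnorm, le_mul_iff_one_le_right hr]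
  have hleδ (x : Euc n) : ‖r • x‖ ≤ (1 - δ) * r ↔ ‖x‖ ≤ 1 - δ := by
    rw [hnorm, mul_comm, mul_le_mul_iff_left₀ hr]
  refine
    { width_pos := hδ
      width_le := hδ2
      eq_exterior := fun x hx ↦ if_pos ((hle x).2 hx)
      eq_annulus := fun x hxδ hx1 ↦ ?_
      eq_interior := fun x hx ↦ ?_
      cutoff_mem_Icc := fun _ ↦ hη _
      cutoff_exterior := fun x hx ↦ hη0 _ (le_mul_of_one_le_right hr.le hx)
      cutoff_interior := fun x hx ↦ hη1 _ (by positivity) (hnorm x ▸ (hleδ x).2 hx.le)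
      abs_cutoff_sub_le := abs_cutoff_sub_le hr hδ hη hL
      norm_sub_le := fun θ hθ ↦ hS _ (by simp [hnorm, hθ]) }
  · have hx0 : 0 < ‖x‖ := by linarith
    rw [glue, if_neg ((hle x).not.2 hx1.not_ge)]
    obtain hxδ | hxδ := hxδ.lt_or_eq
    · have hθ : (r / ‖r • x‖) • r • x = r • NormedSpace.normalize x := by
        rw [hnorm, NormedSpace.normalize, smul_smul, smul_smul]
        congr 1
        field_simp
      rw [if_neg ((hleδ x).not.2 hxδ.not_ge), hθ, hnorm]
    · rw [if_pos ((hleδ x).2 hxδ.ge), hη1 _ (by positivity) (hnorm x ▸ (hleδ x).2 hxδ.ge), hxδ,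
        smul_comm]
      simp [NormedSpace.normalize]
  · rw [glue, if_neg ((hle x).not.2 (by linarith)), if_pos ((hleδ x).2 hx.le), smul_comm]

lemma lipschitzWith_toNNReal_of_abs_deriv_le {f : ℝ → ℝ} {C : ℝ} (hf : Differentiable ℝ f)
    (hC : ∀ t, |deriv f t| ≤ C) : LipschitzWith C.toNNReal f :=
  lipschitzWith_of_nnnorm_deriv_le hf fun t ↦
    NNReal.coe_le_coe.1 <| (hC t).trans (Real.le_coe_toNNReal C)

lemma ofReal_rpow_coefficients_mono {δ α σ a b c : ℝ} (hδ : 0 < δ) (hδ1 : δ ≤ 1) (hα : 0 ≤ α)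
    (hασ : α ≤ σ) (ha : 0 ≤ a) (hb : 0 ≤ b) (hc : 0 ≤ c) (X Y Z : ℝ≥0∞) :
    X + ENNReal.ofReal a * Y + Z + ENNReal.ofReal (δ ^ (-α) * b * c) ≤
      X + ENNReal.ofReal (δ ^ (-α) * a) * Y + Z + ENNReal.ofReal (δ ^ (-σ) * b * c) := by
  have hone : 1 ≤ δ ^ (-α) := Real.one_le_rpow_of_pos_of_le_one_of_nonpos hδ hδ1 (by linarith)
  have hle : δ ^ (-α) ≤ δ ^ (-σ) := Real.rpow_le_rpow_of_exponent_ge hδ hδ1 (by linarith)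
  gcongr
  exact le_mul_of_one_le_left ha hone

end Euclidean

theorem stmt5_general {n : ℕ} (hn : 1 ≤ n) {s p : ℝ} (hs : 0 < s) (hs1 : s < 1) (hp : 0 < p)
    (K : ℝ≥0) :
    ∃ C : ℝ, 0 < C ∧ ∀ {M : ℕ} {r δ : ℝ}, 0 < r → 0 < δ → δ ≤ 1 / 2 →
      ∀ {u v : Euc n → Euc M}, Measurable u → Measurable v →
        ContinuousOn u (sphere 0 r) → ContinuousOn v (sphere 0 r) →
        mixedEnergy p (n + s * p) (surfaceMeasure (Euc n) r) (volume.restrict (ball 0 r)) v < ∞ →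
      ∀ {η : ℝ → ℝ}, (∀ t, η t ∈ Icc 0 1) → (∀ t, 0 ≤ t → t ≤ (1 - δ) * r → η t = 1) →
        (∀ t, r ≤ t → η t = 0) → LipschitzWith (K / (δ * r)).toNNReal η →
        (∀ R, r ≤ R → ∀ x ∈ ball (0 : Euc n) R,
          infDist (glue n M r δ η u v x) (u '' ball 0 R ∪ v '' ball 0 R) ≤
            sSup ((fun θ ↦ ‖u θ - v θ‖) '' sphere 0 r)) ∧
        gagEnergy n M s p (ball 0 (2 * r)) (glue n M r δ η u v) ≤
          gagEnergy n M s p (ball 0 (2 * r) \ ball 0 r) u +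
            ENNReal.ofReal C * (gagEnergy n M s p (ball 0 r) v +
              ENNReal.ofReal r *
                (mixedEnergy p (n + s * p) (surfaceMeasure (Euc n) r)
                    (volume.restrict (ball 0 (2 * r) \ ball 0 r)) u +
                  mixedEnergy p (n + s * p) (surfaceMeasure (Euc n) r)
                    (volume.restrict (ball 0 r)) v) +
              ENNReal.ofReal (δ * r) * mixedEnergy p (n - 1 + s * p) (surfaceMeasure (Euc n) r)
                (surfaceMeasure (Euc n) r) u +
              ENNReal.ofReal (δ ^ (-(s * p)) * r ^ (n - s * p) *
                sSup ((fun θ ↦ ‖u θ - v θ‖) '' sphere 0 r) ^ p)) := by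
  have : Nonempty (Fin n) := ⟨⟨0, hn⟩⟩
  have hα : 0 < s * p := mul_pos hs hp
  obtain ⟨C, hC⟩ := exists_mixedEnergy_ball_two_mul_le.{0} (volume : Measure (Euc n)) hα
    (mul_lt_of_lt_one_left hp hs1) (max 1 K)
  refine ⟨C + 1, by positivity, fun {M r δ} hr hδ hδ2 {u v} hu hv huc hvc hB {η} hη hη1 hη0 hL ↦ ?_⟩
  have hS : ∀ θ ∈ sphere (0 : Euc n) r,
      ‖u θ - v θ‖ ≤ sSup ((fun θ ↦ ‖u θ - v θ‖) '' sphere 0 r) := fun θ hθ ↦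
    le_csSup ((isCompact_sphere 0 r).bddAbove_image (huc.sub hvc).norm) (mem_image_of_mem _ hθ)
  have h := isUnitGluing_glue hr hδ hδ2 hη hη1 hη0 hL hS
  rw [finrank_euclideanSpace_fin] at hC
  refine ⟨fun R hR x hx ↦ infDist_le_of_mixedEnergy_ne_top volume hp.le hα hr h hv hvc ?_ hR hx, ?_⟩
  · simpa using hB.ne
  · have hC1 : (C : ℝ≥0∞) ≤ ENNReal.ofReal (C + 1) := by
      rw [ENNReal.le_ofReal_iff_toReal_le ENNReal.coe_ne_top (by positivity)]
      exact le_add_of_nonneg_right zero_le_one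
    exact (hC hr h hu hv (measurable_glue hL.continuous.measurable hu hv)).trans (by grw [hC1]; rfl)

/-- a fractional Luckhaus-type gluing lemma. -/
theorem stmt5 (n : ℕ) (hn : 2 ≤ n) (s p : ℝ) (hs : 0 < s) (hs1 : s < 1) (hp : 1 < p) :
    ∃ C : ℝ, 0 < C ∧
      ∀ (M : ℕ), 1 ≤ M → ∀ (r δ : ℝ), 0 < r → 0 < δ → δ < 1 / 4 →
      ∀ u v : Euc n → Euc M, Measurable u → Measurable v →
        ContinuousOn u (Metric.sphere (0 : Euc n) r) →
        ContinuousOn v (Metric.sphere (0 : Euc n) r) →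
        (∫⁻ θ in Metric.sphere (0 : Euc n) r,
            (∫⁻ y in Metric.ball (0 : Euc n) (2 * r) \ Metric.ball (0 : Euc n) r,
              ENNReal.ofReal (‖u θ - u y‖ ^ p / ‖θ - y‖ ^ ((n : ℝ) + s * p)))
            ∂μH[(n : ℝ) - 1]) < ⊤ →
        (∫⁻ θ in Metric.sphere (0 : Euc n) r,
            (∫⁻ y in Metric.ball (0 : Euc n) r,
              ENNReal.ofReal (‖v θ - v y‖ ^ p / ‖θ - y‖ ^ ((n : ℝ) + s * p)))
            ∂μH[(n : ℝ) - 1]) < ⊤ →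
        (∫⁻ θ in Metric.sphere (0 : Euc n) r, ∫⁻ ω in Metric.sphere (0 : Euc n) r,
            ENNReal.ofReal (‖u θ - u ω‖ ^ p / ‖θ - ω‖ ^ ((n : ℝ) - 1 + s * p))
            ∂μH[(n : ℝ) - 1] ∂μH[(n : ℝ) - 1]) < ⊤ →
      ∀ η : ℝ → ℝ, ContDiff ℝ (⊤ : ℕ∞) η → (∀ x, η x ∈ Set.Icc (0 : ℝ) 1) →
        (∀ x : ℝ, 0 ≤ x → x ≤ (1 - 3 * δ / 4) * r → η x = 1) →
        (∀ x : ℝ, (1 - δ / 2) * r ≤ x → η x = 0) →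
        (∀ x : ℝ, |deriv η x| ≤ 100 / (δ * r)) →
        -- (i) the glued map stays close to the union of the images
        ((∀ R : ℝ, r ≤ R → ∀ x ∈ Metric.ball (0 : Euc n) R,
            Metric.infDist (glue n M r δ η u v x)
                (u '' Metric.ball (0 : Euc n) R ∪ v '' Metric.ball (0 : Euc n) R)
              ≤ sSup ((fun θ => ‖u θ - v θ‖) '' Metric.sphere (0 : Euc n) r))
        -- (ii) energy estimate for the glued map
        ∧ gagEnergy n M s p (Metric.ball (0 : Euc n) (2 * r)) (glue n M r δ η u v)
            ≤ gagEnergy n M s p (Metric.ball (0 : Euc n) (2 * r) \ Metric.ball (0 : Euc n) r) u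
              + ENNReal.ofReal C *
                (gagEnergy n M s p (Metric.ball (0 : Euc n) r) v
                  + ENNReal.ofReal (δ ^ (-(s * p)) * r) *
                      ((∫⁻ θ in Metric.sphere (0 : Euc n) r,
                          (∫⁻ y in Metric.ball (0 : Euc n) (2 * r) \ Metric.ball (0 : Euc n) r,
                            ENNReal.ofReal (‖u θ - u y‖ ^ p / ‖θ - y‖ ^ ((n : ℝ) + s * p)))
                          ∂μH[(n : ℝ) - 1])
                        + (∫⁻ θ in Metric.sphere (0 : Euc n) r,
                            (∫⁻ y in Metric.ball (0 : Euc n) r,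
                              ENNReal.ofReal (‖v θ - v y‖ ^ p / ‖θ - y‖ ^ ((n : ℝ) + s * p)))
                            ∂μH[(n : ℝ) - 1]))
                  + ENNReal.ofReal (δ * r) *
                      (∫⁻ θ in Metric.sphere (0 : Euc n) r, ∫⁻ ω in Metric.sphere (0 : Euc n) r,
                        ENNReal.ofReal (‖u θ - u ω‖ ^ p / ‖θ - ω‖ ^ ((n : ℝ) - 1 + s * p))
                        ∂μH[(n : ℝ) - 1] ∂μH[(n : ℝ) - 1])
                  + ENNReal.ofReal (δ ^ (-(max (p - 1) (s * p))) * r ^ ((n : ℝ) - s * p) *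
                      (sSup ((fun θ => ‖u θ - v θ‖) '' Metric.sphere (0 : Euc n) r)) ^ p))) := by
  obtain ⟨C, hC0, hC⟩ := stmt5_general (one_le_two.trans hn) hs hs1 (one_pos.trans hp) 100
  refine ⟨C, hC0, fun M _ r δ hr hδ hδ1 u v hu hv huc hvc _ hB _ η hη hη01 hη1 hη0 hη' ↦ ?_⟩
  simp only [surfaceMeasure_euc, mixedEnergy, gagliardoKernel] at hC
  refine (hC hr hδ (by linarith) hu hv huc hvc hB hη01
    (fun t ht htr ↦ hη1 t ht (htr.trans (by gcongr; linarith)))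
    (fun t ht ↦ hη0 t (ht.trans' (mul_le_of_le_one_left hr.le (by linarith))))
    (lipschitzWith_toNNReal_of_abs_deriv_le (hη.differentiable (by simp)) hη')).imp_right
    fun h ↦ h.trans ?_
  have hS : 0 ≤ sSup ((fun θ ↦ ‖u θ - v θ‖) '' sphere 0 r) :=
    Real.sSup_nonneg (forall_mem_image.2 fun _ _ ↦ norm_nonneg _)
  gcongr _ + _ * ?_
  exact ofReal_rpow_coefficients_mono hδ (by linarith) (by positivity) (le_max_right _ _) hr.le
    (by positivity) (by positivity) _ _ _
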